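/- arXiv:1805.11323 — 5 statements merged into one kernel-verified Lean document; each statement's English description precedes it below -/
import Mathlib

section
/- For all z ∈ ℂ and generic tuples ū (length n), v̄ (length m): (1−z)^{n}·K^{(z)}_{n,m}(ū | v̄) = (1−z)^{m}·Σ_{ū ⇒ {ū_I, ū_II}} (−z)^{#ū_I} f(ū_II, v̄) f(ū_I, ū_II), and (1−z)^{n}·\bar{K}^{(z)}_{n,m}(ū | v̄) = (1−z)^{m}·Σ_{ū ⇒ {ū_I, ū_II}} (−z)^{#ū_I} f(v̄, ū_II) f(ū_II, ū_I), where the sums run over all partitions of ū into two disjoint subtuples. -/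
open scoped BigOperators

noncomputable section

/-- The rational function `g(u,v) = c/(u-v)`. -/
def gC (c u v : ℂ) : ℂ := c / (u - v)

/-- The rational function `f(u,v) = (u-v+c)/(u-v)`. -/
def fC (c u v : ℂ) : ℂ := (u - v + c) / (u - v)

/-- The rational function `h(u,v) = (u-v+c)/c`. -/
def hC (c u v : ℂ) : ℂ := (u - v + c) / c

/-- A family of parameters is generic if all pairwise differences avoid `0, ±c, ±2c`. -/
def Generic (c : ℂ) {ι : Type*} (w : ι → ℂ) : Prop :=
  ∀ i j, i ≠ j → w i - w j ≠ 0 ∧ w i - w j ≠ c ∧ w i - w j ≠ -c ∧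
    w i - w j ≠ 2 * c ∧ w i - w j ≠ -2 * c

/-- The modified Izergin determinant `K^{(z)}(x̄|ȳ)`. -/
def KIz (c z : ℂ) {ι κ : Type*} [Fintype ι] [Fintype κ] [DecidableEq κ]
    (x : ι → ℂ) (y : κ → ℂ) : ℂ :=
  Matrix.det (Matrix.of fun j k : κ =>
    -z * (if j = k then 1 else 0) +
      (∏ i, fC c (x i) (y j)) * (∏ i ∈ Finset.univ.erase j, fC c (y j) (y i))
        / hC c (y j) (y k))

/-- The conjugated modified Izergin determinant: `c` is replaced by `-c`. -/
def KIzBar (c z : ℂ) {ι κ : Type*} [Fintype ι] [Fintype κ] [DecidableEq κ]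
    (x : ι → ℂ) (y : κ → ℂ) : ℂ :=
  KIz (-c) z x y

/-- Restriction of a tuple to a subtuple indexed by a `Finset`. -/
def restr {p : ℕ} (w : Fin p → ℂ) (s : Finset (Fin p)) : {x // x ∈ s} → ℂ :=
  fun i => w i.1

/-- Double product `f(w̄_s, w̄_t)` over two subtuples of a tuple. -/
def fSS (c : ℂ) {p : ℕ} (w : Fin p → ℂ) (s t : Finset (Fin p)) : ℂ :=
  ∏ i ∈ s, ∏ j ∈ t, fC c (w i) (w j)

lemma fC_eq {c x y : ℂ} (h : x ≠ y) : fC c x y = 1 + c / (x - y) := by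
  have : x - y ≠ 0 := sub_ne_zero.2 h
  unfold fC; field_simp

lemma fC_neg (c x y : ℂ) : fC (-c) x y = fC c y x := by
  unfold fC
  rw [← neg_div_neg_eq]
  congr 1 <;> ring

/-- Partial fraction expansion of a product. -/
lemma pf_basic {ι : Type*} [DecidableEq ι] (w d : ι → ℂ) (hw : Function.Injective w)
    (A : Finset ι) : ∀ x : ℂ, (∀ k ∈ A, x ≠ w k) →
    ∏ k ∈ A, (1 + d k / (x - w k)) =
      1 + ∑ k ∈ A, d k / (x - w k) * ∏ l ∈ A.erase k, (1 + d l / (w k - w l)) := by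
  induction A using Finset.induction_on with
  | empty => intro x _; simp
  | insert a A ha ih =>
    intro x hx
    have hxA : ∀ k ∈ A, x ≠ w k := fun k hk => hx k (Finset.mem_insert_of_mem hk)
    have hxa : x ≠ w a := hx a (Finset.mem_insert_self _ _)
    have hak : ∀ k ∈ A, w a ≠ w k := fun k hk h => ha (hw h ▸ hk)
    rw [Finset.prod_insert ha, Finset.sum_insert ha, Finset.erase_insert ha, ih x hxA,
      ih (w a) hak]
    have e : ∑ k ∈ A, d k / (x - w k) * ∏ l ∈ (insert a A).erase k, (1 + d l / (w k - w l))
        = ∑ k ∈ A, d k / (x - w k) * ((1 + d a / (w k - w a)) *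
            ∏ l ∈ A.erase k, (1 + d l / (w k - w l))) := by
      refine Finset.sum_congr rfl fun k hk => ?_
      have hka : a ≠ k := fun h => ha (h ▸ hk)
      rw [Finset.erase_insert_of_ne hka, Finset.prod_insert (by simp [ha])]
    rw [e]
    suffices h : ∑ k ∈ A, d k / (x - w k) * ∏ l ∈ A.erase k, (1 + d l / (w k - w l)) +
        ∑ k ∈ A, d a / (x - w a) * (d k / (x - w k) * ∏ l ∈ A.erase k, (1 + d l / (w k - w l)))
        = ∑ k ∈ A, d a / (x - w a) * (d k / (w a - w k) * ∏ l ∈ A.erase k, (1 + d l / (w k - w l)))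
        + ∑ k ∈ A, d k / (x - w k) * ((1 + d a / (w k - w a)) *
            ∏ l ∈ A.erase k, (1 + d l / (w k - w l))) by
      rw [← Finset.mul_sum, ← Finset.mul_sum] at h
      linear_combination h
    rw [← Finset.sum_add_distrib, ← Finset.sum_add_distrib]
    refine Finset.sum_congr rfl fun k hk => ?_
    generalize (∏ l ∈ A.erase k, (1 + d l / (w k - w l))) = r
    have h1 : x - w k ≠ 0 := sub_ne_zero.2 (hxA k hk)
    have h2 : x - w a ≠ 0 := sub_ne_zero.2 hxa
    have h3 : w a - w k ≠ 0 := sub_ne_zero.2 (hak k hk)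
    have h4 : w k - w a = -(w a - w k) := by ring
    rw [h4]
    field_simp
    ring

lemma pf_one {ι : Type*} [DecidableEq ι] (c : ℂ) (w : ι → ℂ) (hw : Function.Injective w)
    (A : Finset ι) (x : ℂ) (hx : ∀ k ∈ A, x ≠ w k) :
    ∏ k ∈ A, fC c x (w k) =
      1 + ∑ k ∈ A, c / (x - w k) * ∏ l ∈ A.erase k, fC c (w k) (w l) := by
  have := pf_basic w (fun _ => c) hw A x hx
  rw [Finset.prod_congr rfl fun k hk => fC_eq (hx k hk), this]
  congr 1
  refine Finset.sum_congr rfl fun k hk => ?_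
  congr 1
  refine Finset.prod_congr rfl fun l hl => ?_
  rw [fC_eq]
  exact fun h => (Finset.ne_of_mem_erase hl) (hw h).symm

lemma pf_two {α β : Type*} [DecidableEq α] [DecidableEq β] (c : ℂ) (u : α → ℂ) (v : β → ℂ)
    (hu : Function.Injective u) (hv : Function.Injective v) (huv : ∀ i j, u i ≠ v j)
    (S : Finset α) (V : Finset β) (x : ℂ) (hxS : ∀ k ∈ S, x ≠ u k) (hxV : ∀ k ∈ V, x ≠ v k) :
    (∏ j ∈ V, fC c x (v j)) * (∏ i ∈ S, fC c (u i) x) =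
      1 + (∑ j ∈ V, c / (x - v j) * ((∏ l ∈ V.erase j, fC c (v j) (v l)) *
          ∏ i ∈ S, fC c (u i) (v j)))
        - ∑ i ∈ S, c / (x - u i) * ((∏ j ∈ V, fC c (u i) (v j)) *
          ∏ l ∈ S.erase i, fC c (u l) (u i)) := by
  have hinj : Function.Injective (Sum.elim u v) := hu.sumElim hv huv
  have := pf_basic (Sum.elim u v) (Sum.elim (fun _ => -c) (fun _ => c)) hinj (S.disjSum V) x
    (by
      intro k hk
      rcases k with k | k
      · exact hxS k (by simpa using hk)
      · exact hxV k (by simpa using hk))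
  have e1 : ∀ i, (S.disjSum V).erase (Sum.inl i) = (S.erase i).disjSum V := by
    intro i; ext (a | b) <;> simp
  have e2 : ∀ j, (S.disjSum V).erase (Sum.inr j) = S.disjSum (V.erase j) := by
    intro i; ext (a | b) <;> simp
  simp only [Finset.prod_disjSum, Finset.sum_disjSum, e1, e2, Sum.elim_inl, Sum.elim_inr] at this
  have a1 : ∏ j ∈ V, fC c x (v j) = ∏ j ∈ V, (1 + c / (x - v j)) :=
    Finset.prod_congr rfl fun k hk => fC_eq (hxV k hk)
  have a2 : ∏ i ∈ S, fC c (u i) x = ∏ j ∈ S, (1 + -c / (x - u j)) :=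
    Finset.prod_congr rfl fun k hk => by rw [← fC_neg, fC_eq (hxS k hk)]
  rw [a1, a2, mul_comm, this, add_sub_assoc]
  congr 1
  rw [add_comm, sub_eq_add_neg, ← Finset.sum_neg_distrib]
  congr 1
  · refine Finset.sum_congr rfl fun j hj => ?_
    congr 1
    rw [mul_comm]
    congr 1
    · refine Finset.prod_congr rfl fun l hl => ?_
      rw [fC_eq]
      exact fun h => (Finset.ne_of_mem_erase hl) (hv h).symm
    · refine Finset.prod_congr rfl fun l hl => ?_
      rw [← fC_neg, fC_eq (huv _ _).symm]
  · refine Finset.sum_congr rfl fun i hi => ?_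
    rw [neg_div, neg_mul]
    congr 2
    rw [mul_comm]
    congr 1
    · refine Finset.prod_congr rfl fun l hl => ?_
      rw [fC_eq (huv _ _)]
    · refine Finset.prod_congr rfl fun l hl => ?_
      rw [← fC_neg, fC_eq]
      exact fun h => (Finset.ne_of_mem_erase hl) (hu h).symm

lemma swap_in {α : Type*} [DecidableEq α] (U : Finset α) (X : Finset α → α → ℂ) :
    ∑ S ∈ U.powerset, ∑ i ∈ S, X S i =
      ∑ i ∈ U, ∑ Q ∈ (U.erase i).powerset, X (insert i Q) i := by
  have : ∀ S ∈ U.powerset, ∑ i ∈ S, X S i = ∑ i ∈ U, if i ∈ S then X S i else 0 := by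
    intro S hS
    rw [← Finset.sum_filter]
    refine Finset.sum_congr ?_ fun _ _ => rfl
    rw [Finset.filter_mem_eq_inter, Finset.inter_eq_right.2 (Finset.mem_powerset.1 hS)]
  rw [Finset.sum_congr rfl this, Finset.sum_comm]
  refine Finset.sum_congr rfl fun i hi => ?_
  conv_lhs => rw [← Finset.insert_erase hi]
  rw [Finset.sum_powerset_insert (Finset.notMem_erase i U)]
  rw [Finset.sum_eq_zero, zero_add]
  · exact Finset.sum_congr rfl fun Q _ => by simp
  · intro Q hQ
    rw [if_neg]
    exact fun h => Finset.notMem_erase i U (Finset.mem_powerset.1 hQ h)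

lemma swap_out {α : Type*} [DecidableEq α] (U : Finset α) (X : Finset α → α → ℂ) :
    ∑ S ∈ U.powerset, ∑ i ∈ U \ S, X S i =
      ∑ i ∈ U, ∑ Q ∈ (U.erase i).powerset, X Q i := by
  have : ∀ S ∈ U.powerset, ∑ i ∈ U \ S, X S i = ∑ i ∈ U, if i ∉ S then X S i else 0 := by
    intro S hS
    rw [← Finset.sum_filter, ← Finset.sdiff_eq_filter]
  rw [Finset.sum_congr rfl this, Finset.sum_comm]
  refine Finset.sum_congr rfl fun i hi => ?_
  conv_lhs => rw [← Finset.insert_erase hi]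
  rw [Finset.sum_powerset_insert (Finset.notMem_erase i U)]
  rw [Finset.sum_eq_zero (s := (U.erase i).powerset) (f := fun t => if i ∉ insert i t then _ else _),
    add_zero]
  · refine Finset.sum_congr rfl fun Q hQ => ?_
    rw [if_pos]
    exact fun h => Finset.notMem_erase i U (Finset.mem_powerset.1 hQ h)
  · intro Q hQ
    simp

/-- Sum over partitions of the first family. -/
def ZP {α β : Type*} [DecidableEq α] (c z : ℂ) (u : α → ℂ) (v : β → ℂ)
    (U : Finset α) (V : Finset β) : ℂ :=
  ∑ S ∈ U.powerset, (-z) ^ S.card * (∏ i ∈ U \ S, ∏ j ∈ V, fC c (u i) (v j)) *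
    (∏ i ∈ S, ∏ j ∈ U \ S, fC c (u i) (u j))

/-- Sum over partitions of the second family. -/
def LP {α β : Type*} [DecidableEq β] (c z : ℂ) (u : α → ℂ) (v : β → ℂ)
    (U : Finset α) (V : Finset β) : ℂ :=
  ∑ T ∈ V.powerset, (-z) ^ (V \ T).card * (∏ i ∈ U, ∏ j ∈ T, fC c (u i) (v j)) *
    (∏ i ∈ T, ∏ j ∈ V \ T, fC c (v i) (v j))

lemma LP_rec {α β : Type*} [DecidableEq α] [DecidableEq β] (c z : ℂ) (u : α → ℂ) (v : β → ℂ)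
    (hv : Function.Injective v) (huv : ∀ i j, u i ≠ v j)
    (U : Finset α) (a : α) (ha : a ∉ U) (V : Finset β) :
    LP c z u v (insert a U) V = LP c z u v U V +
      ∑ j ∈ V, c / (u a - v j) * ((∏ l ∈ V.erase j, fC c (v j) (v l)) *
        ∏ i ∈ U, fC c (u i) (v j)) * LP c z u v U (V.erase j) := by
  unfold LP
  simp only [Finset.prod_insert ha]
  simp only [pf_one c v hv _ (u a) (fun k _ => huv a k)]
  simp only [add_mul, mul_add, one_mul, Finset.sum_add_distrib, Finset.sum_mul, Finset.mul_sum]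
  congr 1
  rw [swap_in]
  refine Finset.sum_congr rfl fun j hj => ?_
  refine Finset.sum_congr rfl fun Q hQ => ?_
  have hQ' := Finset.mem_powerset.1 hQ
  have hjQ : j ∉ Q := fun h => Finset.notMem_erase j V (hQ' h)
  have e1 : V \ insert j Q = V.erase j \ Q := by
    ext x; simp; tauto
  have e2 : ∏ l ∈ V.erase j, fC c (v j) (v l) =
      (∏ l ∈ V.erase j \ Q, fC c (v j) (v l)) * ∏ l ∈ Q, fC c (v j) (v l) :=
    (Finset.prod_sdiff hQ').symm
  rw [e1, e2, Finset.erase_insert hjQ, Finset.prod_insert hjQ]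
  simp only [Finset.prod_insert hjQ, Finset.prod_mul_distrib]
  ring

lemma ZP_rec {α β : Type*} [DecidableEq α] [DecidableEq β] (c z : ℂ) (u : α → ℂ) (v : β → ℂ)
    (hu : Function.Injective u) (hv : Function.Injective v) (huv : ∀ i j, u i ≠ v j)
    (U : Finset α) (a : α) (ha : a ∉ U) (V : Finset β) :
    ZP c z u v (insert a U) V = (1 - z) * ZP c z u v U V +
      ∑ j ∈ V, c / (u a - v j) * ((∏ l ∈ V.erase j, fC c (v j) (v l)) *
        ∏ i ∈ U, fC c (u i) (v j)) * ZP c z u v U (V.erase j) := by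
  have hne : ∀ k ∈ U, u a ≠ u k := fun k hk h => ha (hu h ▸ hk)
  have hA : ∑ S ∈ U.powerset, (-z) ^ S.card *
        (∏ i ∈ insert a U \ S, ∏ j ∈ V, fC c (u i) (v j)) *
        (∏ i ∈ S, ∏ j ∈ insert a U \ S, fC c (u i) (u j)) =
      ZP c z u v U V +
      (∑ S ∈ U.powerset, ∑ j ∈ V, c / (u a - v j) * ((∏ l ∈ V.erase j, fC c (v j) (v l)) *
        ∏ i ∈ U, fC c (u i) (v j)) * ((-z) ^ S.card *
          (∏ i ∈ U \ S, ∏ j ∈ V.erase j, fC c (u i) (v j)) *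
          (∏ i ∈ S, ∏ j ∈ U \ S, fC c (u i) (u j)))) -
      ∑ S ∈ U.powerset, ∑ i ∈ S, c / (u a - u i) * ((-z) ^ S.card *
        ((∏ i ∈ U \ S, ∏ j ∈ V, fC c (u i) (v j)) *
        (∏ i ∈ S, ∏ j ∈ U \ S, fC c (u i) (u j)) *
        ((∏ j ∈ V, fC c (u i) (v j)) * ∏ l ∈ S.erase i, fC c (u l) (u i)))) := by
    unfold ZP
    rw [← Finset.sum_add_distrib, ← Finset.sum_sub_distrib]
    refine Finset.sum_congr rfl fun S hS => ?_
    have hS' := Finset.mem_powerset.1 hS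
    have haS : a ∉ S := fun h => ha (hS' h)
    have haUS : a ∉ U \ S := fun h => ha (Finset.mem_sdiff.1 h).1
    have e1 : insert a U \ S = insert a (U \ S) := Finset.insert_sdiff_of_notMem _ haS
    have p := pf_two c u v hu hv huv S V (u a) (fun k hk => hne k (hS' hk)) (fun k _ => huv a k)
    rw [e1]
    simp only [Finset.prod_insert haUS, Finset.prod_mul_distrib]
    have : ∀ j ∈ V, c / (u a - v j) * ((∏ l ∈ V.erase j, fC c (v j) (v l)) *
        ∏ i ∈ U, fC c (u i) (v j)) * ((-z) ^ S.card *
          (∏ i ∈ U \ S, ∏ j ∈ V.erase j, fC c (u i) (v j)) *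
          (∏ i ∈ S, ∏ j ∈ U \ S, fC c (u i) (u j))) =
        ((-z) ^ S.card * (∏ i ∈ U \ S, ∏ j ∈ V, fC c (u i) (v j)) *
          (∏ i ∈ S, ∏ j ∈ U \ S, fC c (u i) (u j))) *
        (c / (u a - v j) * ((∏ l ∈ V.erase j, fC c (v j) (v l)) *
          ∏ i ∈ S, fC c (u i) (v j))) := by
      intro j hj
      have q1 : ∏ i ∈ U, fC c (u i) (v j) = (∏ i ∈ U \ S, fC c (u i) (v j)) *
        ∏ i ∈ S, fC c (u i) (v j) := (Finset.prod_sdiff hS').symm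
      have q2 : ∏ i ∈ U \ S, ∏ j ∈ V, fC c (u i) (v j) = (∏ i ∈ U \ S, fC c (u i) (v j)) *
          (∏ i ∈ U \ S, ∏ j ∈ V.erase j, fC c (u i) (v j)) := by
        rw [← Finset.prod_mul_distrib]
        exact Finset.prod_congr rfl fun i _ => (Finset.mul_prod_erase _ _ hj).symm
      rw [q1, q2]; ring
    rw [Finset.sum_congr rfl this, ← Finset.mul_sum]
    have : ∀ i ∈ S, c / (u a - u i) * ((-z) ^ S.card *
        ((∏ i ∈ U \ S, ∏ j ∈ V, fC c (u i) (v j)) *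
        (∏ i ∈ S, ∏ j ∈ U \ S, fC c (u i) (u j)) *
        ((∏ j ∈ V, fC c (u i) (v j)) * ∏ l ∈ S.erase i, fC c (u l) (u i)))) =
        ((-z) ^ S.card * (∏ i ∈ U \ S, ∏ j ∈ V, fC c (u i) (v j)) *
          (∏ i ∈ S, ∏ j ∈ U \ S, fC c (u i) (u j))) *
        (c / (u a - u i) * ((∏ j ∈ V, fC c (u i) (v j)) *
          ∏ l ∈ S.erase i, fC c (u l) (u i))) := by
      intro i hi; ring
    rw [Finset.sum_congr rfl this, ← Finset.mul_sum]
    linear_combination ((-z) ^ S.card * (∏ i ∈ U \ S, ∏ j ∈ V, fC c (u i) (v j)) *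
          (∏ i ∈ S, ∏ j ∈ U \ S, fC c (u i) (u j))) * p
  have hB : ∑ S ∈ U.powerset, (-z) ^ (insert a S).card *
        (∏ i ∈ insert a U \ insert a S, ∏ j ∈ V, fC c (u i) (v j)) *
        (∏ i ∈ insert a S, ∏ j ∈ insert a U \ insert a S, fC c (u i) (u j)) =
      (-z) * ZP c z u v U V +
      ∑ S ∈ U.powerset, ∑ i ∈ U \ S, c / (u a - u i) * ((-z) ^ (S.card + 1) *
        ((∏ i ∈ U \ S, ∏ j ∈ V, fC c (u i) (v j)) *
        (∏ i ∈ S, ∏ j ∈ U \ S, fC c (u i) (u j)) *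
        (∏ l ∈ (U \ S).erase i, fC c (u i) (u l)))) := by
    unfold ZP
    rw [Finset.mul_sum, ← Finset.sum_add_distrib]
    refine Finset.sum_congr rfl fun S hS => ?_
    have hS' := Finset.mem_powerset.1 hS
    have haS : a ∉ S := fun h => ha (hS' h)
    have e1 : insert a U \ insert a S = U \ S := by
      ext x; simp; rintro h1 h2 rfl; exact ha h1
    have p := pf_one c u hu (U \ S) (u a) (fun k hk => hne k (Finset.mem_sdiff.1 hk).1)
    rw [e1, Finset.card_insert_of_notMem haS, Finset.prod_insert haS, p]
    simp only [add_mul, mul_add, one_mul, Finset.sum_mul, Finset.mul_sum]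
    congr 1
    · ring
    · refine Finset.sum_congr rfl fun i hi => ?_
      ring
  have hcancel : ∑ S ∈ U.powerset, ∑ i ∈ S, c / (u a - u i) * ((-z) ^ S.card *
        ((∏ i ∈ U \ S, ∏ j ∈ V, fC c (u i) (v j)) *
        (∏ i ∈ S, ∏ j ∈ U \ S, fC c (u i) (u j)) *
        ((∏ j ∈ V, fC c (u i) (v j)) * ∏ l ∈ S.erase i, fC c (u l) (u i)))) =
      ∑ S ∈ U.powerset, ∑ i ∈ U \ S, c / (u a - u i) * ((-z) ^ (S.card + 1) *
        ((∏ i ∈ U \ S, ∏ j ∈ V, fC c (u i) (v j)) *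
        (∏ i ∈ S, ∏ j ∈ U \ S, fC c (u i) (u j)) *
        (∏ l ∈ (U \ S).erase i, fC c (u i) (u l)))) := by
    rw [swap_in, swap_out]
    refine Finset.sum_congr rfl fun i hi => ?_
    refine Finset.sum_congr rfl fun Q hQ => ?_
    have hQ' := Finset.mem_powerset.1 hQ
    have hiQ : i ∉ Q := fun h => Finset.notMem_erase i U (hQ' h)
    have hiW : i ∉ U \ insert i Q := by simp
    have e1 : U \ Q = insert i (U \ insert i Q) := by
      ext x; simp
      by_cases h : x = i
      · subst h; simp [hi, hiQ]
      · simp [h]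
    rw [e1, Finset.erase_insert hiQ, Finset.erase_insert hiW, Finset.card_insert_of_notMem hiQ]
    simp only [Finset.prod_insert hiQ, Finset.prod_insert hiW, Finset.prod_mul_distrib]
    ring
  have : ZP c z u v (insert a U) V = _ := Finset.sum_powerset_insert ha _
  rw [this, hA, hB, hcancel, Finset.sum_comm]
  simp only [← Finset.mul_sum]
  unfold ZP
  ring

lemma ZP_empty {α : Type*} [DecidableEq α] (c z : ℂ) (u : α → ℂ)
    (hu : Function.Injective u) (U : Finset α) :
    ZP c z u (fun e : Empty => e.elim) U ∅ = (1 - z) ^ U.card := by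
  induction U using Finset.induction_on with
  | empty => simp [ZP]
  | insert a U ha ih =>
    rw [ZP_rec c z u _ hu (fun e => e.elim) (fun _ e => e.elim) U a ha, ih,
      Finset.card_insert_of_notMem ha]
    simp [pow_succ']

lemma LP_empty {α β : Type*} [DecidableEq β] (c z : ℂ) (u : α → ℂ) (v : β → ℂ)
    (hv : Function.Injective v) (V : Finset β) :
    LP c z u v ∅ V = (1 - z) ^ V.card := by
  rw [← ZP_empty (-c) z v hv V]
  unfold LP ZP
  refine Finset.sum_nbij' (fun T => V \ T) (fun T => V \ T) ?_ ?_ ?_ ?_ ?_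
  · intro T _; simp
  · intro T _; simp
  · intro T hT; simpa using hT
  · intro T hT; simpa using hT
  · intro T hT
    have : V \ (V \ T) = T := by simpa using hT
    rw [this, Finset.prod_comm (s := T)]
    simp [fC_neg]

lemma main_identity {α β : Type*} [DecidableEq α] [DecidableEq β] (c z : ℂ)
    (u : α → ℂ) (v : β → ℂ)
    (hu : Function.Injective u) (hv : Function.Injective v) (huv : ∀ i j, u i ≠ v j)
    (U : Finset α) : ∀ V : Finset β,
    (1 - z) ^ U.card * LP c z u v U V = (1 - z) ^ V.card * ZP c z u v U V := by
  induction U using Finset.induction_on with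
  | empty => intro V; rw [LP_empty c z u v hv]; simp [ZP]
  | insert a U ha ih =>
    intro V
    rw [LP_rec c z u v hv huv U a ha, ZP_rec c z u v hu hv huv U a ha,
      Finset.card_insert_of_notMem ha, mul_add, mul_add]
    congr 1
    · linear_combination (1 - z) * ih V
    · rw [Finset.mul_sum, Finset.mul_sum]
      refine Finset.sum_congr rfl fun j hj => ?_
      have := ih (V.erase j)
      rw [← Finset.card_erase_add_one hj]
      generalize c / (u a - v j) * ((∏ l ∈ V.erase j, fC c (v j) (v l)) *
        ∏ i ∈ U, fC c (u i) (v j)) = r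
      linear_combination (1 - z) * r * this

lemma cauchy_det (c : ℂ) (hc : c ≠ 0) (κ : Type) [hκ : Fintype κ] :
    ∀ [DecidableEq κ] (y : κ → ℂ), (∀ j k, y j - y k + c ≠ 0) →
    Matrix.det (Matrix.of fun j k : κ => c / (y j - y k + c)) =
      ∏ j, ∏ k, if j = k then 1 else (y j - y k) / (y j - y k + c) := by
  refine Fintype.induction_empty_option (P := fun (κ : Type) (_ : Fintype κ) =>
    ∀ [DecidableEq κ] (y : κ → ℂ), (∀ j k, y j - y k + c ≠ 0) →
    Matrix.det (Matrix.of fun j k : κ => c / (y j - y k + c)) =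
      ∏ j, ∏ k, if j = k then 1 else (y j - y k) / (y j - y k + c)) ?_ ?_ ?_ κ
  · intro α β hβ e ih _ y hy
    let _ := Fintype.ofEquiv _ e.symm
    classical
    have := ih (y ∘ e) (fun j k => hy _ _)
    rw [← Matrix.det_reindex_self e] at this
    convert this using 1
    · congr 1; ext j k; simp
    · rw [← e.prod_comp]
      refine Finset.prod_congr rfl fun j _ => ?_
      rw [← e.prod_comp]
      simp
  · intro _ y _; simp
  · intro α _ ih _ y hy
    classical
    rw [← Matrix.det_reindex_self (Equiv.optionEquivSumPUnit.{0} α)]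
    have e : Matrix.reindex (Equiv.optionEquivSumPUnit.{0} α) (Equiv.optionEquivSumPUnit.{0} α)
        (Matrix.of fun j k => c / (y j - y k + c)) =
        Matrix.fromBlocks (Matrix.of fun j k : α => c / (y (some j) - y (some k) + c))
          (Matrix.of fun (j : α) (_ : PUnit) => c / (y (some j) - y none + c))
          (Matrix.of fun (_ : PUnit) (j : α) => c / (y none - y (some j) + c)) 1 := by
      ext (j | j) (k | k) <;> simp [hc]
    rw [e, Matrix.det_fromBlocks_one₂₂]
    have e2 : (Matrix.of fun j k : α => c / (y (some j) - y (some k) + c)) -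
          (Matrix.of fun (j : α) (_ : PUnit) => c / (y (some j) - y none + c)) *
          (Matrix.of fun (_ : PUnit) (j : α) => c / (y none - y (some j) + c)) =
        Matrix.of fun j k => ((y (some j) - y none) / (y (some j) - y none + c)) *
          (Matrix.of fun j k => ((y none - y (some k)) / (y none - y (some k) + c)) *
            (Matrix.of fun j k : α => c / (y (some j) - y (some k) + c)) j k) j k := by
      ext j k
      have h1 := hy (some j) (some k)
      have h2 := hy (some j) none
      have h3 := hy none (some k)
      simp [Matrix.mul_apply]
      field_simp
      ring
    rw [e2, Matrix.det_mul_column, Matrix.det_mul_row, ih _ (fun j k => hy _ _)]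
    simp [Fintype.prod_option, Finset.prod_mul_distrib]
    ring

lemma KIz_eq (c : ℂ) (hc : c ≠ 0) (z : ℂ) (n m : ℕ) (u : Fin n → ℂ) (v : Fin m → ℂ)
    (hv : Function.Injective v) (hvc : ∀ j k, v j - v k + c ≠ 0) :
    KIz c z u v = LP c z u v Finset.univ Finset.univ := by
  unfold KIz LP
  set F : Fin m → ℂ := fun j =>
    (∏ i, fC c (u i) (v j)) * (∏ i ∈ Finset.univ.erase j, fC c (v j) (v i)) with hF
  have e : (Matrix.of fun j k : Fin m => -z * (if j = k then 1 else 0) +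
      (∏ i, fC c (u i) (v j)) * (∏ i ∈ Finset.univ.erase j, fC c (v j) (v i))
        / hC c (v j) (v k)) =
      (fun j k => F j * (c / (v j - v k + c))) + (fun j k => -z * (if j = k then 1 else 0)) := by
    ext j k
    change -z * (if j = k then 1 else 0) + F j / ((v j - v k + c) / c) =
      F j * (c / (v j - v k + c)) + -z * (if j = k then 1 else 0)
    rw [div_div_eq_mul_div, mul_div_assoc, add_comm]
  rw [e]
  refine (AlternatingMap.map_add_univ Matrix.detRowAlternating _ _).trans ?_
  rw [Finset.powerset_univ]
  refine Finset.sum_congr rfl fun T _ => ?_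
  have hN : (Matrix.of (T.piecewise (fun j k => F j * (c / (v j - v k + c)))
      (fun j k => -z * (if j = k then 1 else 0))) : Matrix (Fin m) (Fin m) ℂ) =
      Matrix.of fun j k => if j ∈ T then F j * (c / (v j - v k + c))
        else -z * (if j = k then 1 else 0) := by
    ext j k
    by_cases hj : j ∈ T <;> simp [hj]
  change Matrix.det (Matrix.of (T.piecewise (fun j k => F j * (c / (v j - v k + c)))
      (fun j k => -z * (if j = k then 1 else 0)))) = _
  rw [hN]
  set N : Matrix (Fin m) (Fin m) ℂ := Matrix.of fun j k =>
    if j ∈ T then F j * (c / (v j - v k + c)) else -z * (if j = k then 1 else 0) with hNdef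
  rw [Matrix.twoBlockTriangular_det _ (fun i => i ∈ T)]
  swap
  · intro i hi j hj
    have : i ≠ j := by rintro rfl; exact hi hj
    simp [hNdef, hi, this]
  have d2 : (Matrix.toSquareBlockProp N (fun i => ¬ i ∈ T)).det = (-z) ^ (Finset.univ \ T).card := by
    have : (Matrix.toSquareBlockProp N (fun i => ¬ i ∈ T)) = Matrix.diagonal (fun _ => -z) := by
      ext ⟨j, hj⟩ ⟨k, hk⟩
      simp [Matrix.toSquareBlockProp, hNdef, hj, Matrix.diagonal_apply]
    rw [this, Matrix.det_diagonal]
    simp [Fintype.card_subtype_compl, Finset.card_sdiff]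
  have d1 : (Matrix.toSquareBlockProp N (fun i => i ∈ T)).det =
      (∏ j ∈ T, F j) * ∏ j ∈ T, ∏ k ∈ T.erase j, (v j - v k) / (v j - v k + c) := by
    have : (Matrix.toSquareBlockProp N (fun i => i ∈ T)) = Matrix.of fun j k : {i // i ∈ T} => F j *
          (Matrix.of fun j k : {i // i ∈ T} => c / (v j - v k + c)) j k := by
      ext ⟨j, hj⟩ ⟨k, hk⟩
      simp [Matrix.toSquareBlockProp, hNdef, hj]
    rw [this, Matrix.det_mul_column,
      cauchy_det c hc {i // i ∈ T} (fun i => v i) (fun j k => hvc _ _)]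
    congr 1
    · exact Finset.prod_coe_sort T F
    · rw [← Finset.prod_coe_sort T]
      refine Finset.prod_congr rfl fun j _ => ?_
      rw [← Finset.mul_prod_erase Finset.univ _ (Finset.mem_univ j), if_pos rfl, one_mul]
      refine Finset.prod_bij (fun k _ => k.1) ?_ ?_ ?_ ?_
      · intro k hk
        have := Finset.ne_of_mem_erase hk
        simp [this]
      · intro a _ b _ h; exact Subtype.ext h
      · intro b hb
        refine ⟨⟨b, Finset.mem_of_mem_erase hb⟩, ?_, rfl⟩
        have := Finset.ne_of_mem_erase hb
        simp only [Finset.mem_erase, Finset.mem_univ, and_true]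
        exact fun h => this (congrArg Subtype.val h)
      · intro k hk
        rw [if_neg (Finset.ne_of_mem_erase hk).symm]
  refine Eq.trans (Eq.trans ?_ (congrArg₂ (fun a b : ℂ => a * b) d1 d2)) ?_
  · congr!
  rw [Finset.prod_comm (s := Finset.univ)]
  have key : (∏ j ∈ T, F j) * ∏ j ∈ T, ∏ k ∈ T.erase j, (v j - v k) / (v j - v k + c) =
      (∏ y ∈ T, ∏ x, fC c (u x) (v y)) * ∏ i ∈ T, ∏ j ∈ Finset.univ \ T, fC c (v i) (v j) := by
    rw [← Finset.prod_mul_distrib, ← Finset.prod_mul_distrib]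
    refine Finset.prod_congr rfl fun j hj => ?_
    rw [hF]
    simp only
    rw [mul_assoc]
    congr 1
    have hsub : T.erase j ⊆ Finset.univ.erase j := Finset.erase_subset_erase _ (Finset.subset_univ _)
    have hs : Finset.univ.erase j \ T.erase j = Finset.univ \ T := by
      ext x; simp; constructor
      · tauto
      · intro h; exact ⟨fun h' => h (h' ▸ hj), fun _ => h⟩
    rw [← Finset.prod_sdiff hsub, hs, mul_assoc, ← Finset.prod_mul_distrib,
      Finset.prod_eq_one (s := T.erase j), mul_one]
    intro k hk
    have h1 : v j - v k ≠ 0 := sub_ne_zero.2 fun h => Finset.ne_of_mem_erase hk (hv h).symm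
    have h2 := hvc j k
    unfold fC
    field_simp
  rw [key]
  ring

lemma first_part (c : ℂ) (hc : c ≠ 0) (z : ℂ) (n m : ℕ)
    (u : Fin n → ℂ) (v : Fin m → ℂ)
    (hgen : Generic c (Fin.append u v)) :
    (1 - z) ^ n * KIz c z u v
        = (1 - z) ^ m * ∑ s : Finset (Fin n),
            (-z) ^ s.card * (∏ i ∈ sᶜ, ∏ j, fC c (u i) (v j)) *
              (∏ i ∈ s, ∏ j ∈ sᶜ, fC c (u i) (u j)) := by
  have hinj : Function.Injective (Fin.append u v) := by
    intro i j h
    by_contra hne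
    exact (hgen i j hne).1 (sub_eq_zero.2 h)
  have hu : Function.Injective u := by
    intro i j h
    have : Fin.append u v (Fin.castAdd m i) = Fin.append u v (Fin.castAdd m j) := by simpa using h
    simpa using hinj this
  have hv : Function.Injective v := by
    intro i j h
    have : Fin.append u v (Fin.natAdd n i) = Fin.append u v (Fin.natAdd n j) := by simpa using h
    simpa using hinj this
  have huv : ∀ i j, u i ≠ v j := by
    intro i j h
    have : Fin.append u v (Fin.castAdd m i) = Fin.append u v (Fin.natAdd n j) := by simpa using h
    have := congrArg Fin.val (hinj this)
    simp at this
    omega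
  have hvc : ∀ j k, v j - v k + c ≠ 0 := by
    intro j k h
    by_cases hjk : j = k
    · subst hjk; simp [hc] at h
    · have := (hgen (Fin.natAdd n j) (Fin.natAdd n k) (by simpa using hjk)).2.2.1
      simp only [Fin.append_right] at this
      exact this (by linear_combination h)
  have := main_identity c z u v hu hv huv Finset.univ Finset.univ
  rw [← KIz_eq c hc z n m u v hv hvc] at this
  simpa [ZP, ← Finset.compl_eq_univ_sdiff] using this

/-- Partition expansion of the modified Izergin determinant over partitions of `ū`. -/
theorem stmt12
    (c : ℂ) (hc : c ≠ 0) (z : ℂ) (n m : ℕ)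
    (u : Fin n → ℂ) (v : Fin m → ℂ)
    (hgen : Generic c (Fin.append u v)) :
    (1 - z) ^ n * KIz c z u v
        = (1 - z) ^ m * ∑ s : Finset (Fin n),
            (-z) ^ s.card * (∏ i ∈ sᶜ, ∏ j, fC c (u i) (v j)) *
              (∏ i ∈ s, ∏ j ∈ sᶜ, fC c (u i) (u j)) ∧
      (1 - z) ^ n * KIzBar c z u v
        = (1 - z) ^ m * ∑ s : Finset (Fin n),
            (-z) ^ s.card * (∏ j, ∏ i ∈ sᶜ, fC c (v j) (u i)) *
              (∏ i ∈ sᶜ, ∏ j ∈ s, fC c (u i) (u j)) := by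
  refine ⟨first_part c hc z n m u v hgen, ?_⟩
  have hgen' : Generic (-c) (Fin.append u v) := by
    intro i j hij
    obtain ⟨h1, h2, h3, h4, h5⟩ := hgen i j hij
    refine ⟨h1, h3, by simpa using h2, fun h => h5 (by rw [h]; ring),
      fun h => h4 (by rw [h]; ring)⟩
  have := first_part (-c) (neg_ne_zero.2 hc) z n m u v hgen'
  unfold KIzBar
  rw [this]
  congr 1
  refine Finset.sum_congr rfl fun s _ => ?_
  simp only [fC_neg]
  congr 1
  · congr 1
    exact Finset.prod_comm
  · exact Finset.prod_comm
end
end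

section
/- For all z ∈ ℂ and generic tuples ū (length n), v̄ (length m), the conjugated and ordinary modified Izergin determinants are related by (1−z)^{n}·\bar{K}^{(z)}_{n,m}(ū | v̄) = (1−z)^{m}·K^{(z)}_{m,n}(v̄ | ū). -/
open scoped BigOperators

noncomputable section

open Matrix Polynomial Filter Topology

/-- Barycentric Lagrange interpolation of a product of linear factors. -/
theorem lagrange_prod {κ : Type*} [Fintype κ] [DecidableEq κ] (a b : κ → ℂ)
    (ha : Function.Injective a) (x : ℂ) (hx : ∀ k, x ≠ a k) (i : κ) :
    (∏ k, (x - a k)) * ∑ k, (∏ l ∈ Finset.univ.erase k, (a k - a l)⁻¹) * (x - a k)⁻¹ *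
      (∏ l ∈ Finset.univ.erase i, (a k - b l)) = ∏ l ∈ Finset.univ.erase i, (x - b l) := by
  have hdeg : (Lagrange.nodal (Finset.univ.erase i) b).degree < (Finset.univ : Finset κ).card := by
    rw [Lagrange.degree_nodal]
    exact_mod_cast Finset.card_erase_lt_of_mem (Finset.mem_univ i)
  have h := Lagrange.eq_interpolate (s := Finset.univ) (v := a) ha.injOn hdeg
  have h2 := congrArg (Polynomial.eval x) h
  rw [Lagrange.eval_interpolate_not_at_node _ (fun k _ => hx k)] at h2
  simp only [Lagrange.eval_nodal, Lagrange.nodalWeight] at h2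
  exact h2.symm

/-- A Cauchy matrix is nonsingular. -/
theorem cauchy_det_ne {κ : Type*} [Fintype κ] [DecidableEq κ] (a b : κ → ℂ)
    (ha : Function.Injective a) (hb : Function.Injective b) (hab : ∀ k i, a k ≠ b i) :
    det (Matrix.of fun k i : κ => (a k - b i)⁻¹) ≠ 0 := by
  have key : (Matrix.of fun j k : κ => (∏ k, (b j - a k)) *
      (∏ l ∈ Finset.univ.erase k, (a k - a l)⁻¹) * (b j - a k)⁻¹ * ∏ l, (a k - b l)) *
      (Matrix.of fun k i : κ => (a k - b i)⁻¹) =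
      Matrix.diagonal (fun j => ∏ l ∈ Finset.univ.erase j, (b j - b l)) := by
    ext j i
    have h := lagrange_prod a b ha (b j) (fun k => (hab k j).symm) i
    rw [Matrix.mul_apply, Matrix.diagonal_apply]
    trans ∏ l ∈ Finset.univ.erase i, (b j - b l)
    · rw [← h, Finset.mul_sum]
      refine Finset.sum_congr rfl fun k _ => ?_
      simp only [Matrix.of_apply]
      rw [← Finset.mul_prod_erase Finset.univ (fun l => a k - b l) (Finset.mem_univ i)]
      have : a k - b i ≠ 0 := sub_ne_zero.2 (hab k i)
      field_simp
    · split_ifs with hji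
      · rw [hji]
      · exact Finset.prod_eq_zero (Finset.mem_erase.2 ⟨hji, Finset.mem_univ j⟩) (sub_self _)
  have h2 := congrArg det key
  rw [det_mul, det_diagonal] at h2
  have h3 : ∏ j, ∏ l ∈ Finset.univ.erase j, (b j - b l) ≠ 0 :=
    Finset.prod_ne_zero_iff.2 fun j _ => Finset.prod_ne_zero_iff.2 fun l hl =>
      sub_ne_zero.2 fun h => (Finset.mem_erase.1 hl).1 (hb h).symm
  rw [← h2] at h3
  exact right_ne_zero_of_mul h3

/-- The square case: the modified Izergin determinant as a ratio of two determinants. -/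
theorem square_ratio {κ : Type*} [Fintype κ] [DecidableEq κ] (c z : ℂ) (hc : c ≠ 0)
    (u v : κ → ℂ) (hu : Function.Injective u) (huc : ∀ j k, u j + c ≠ u k)
    (huv : ∀ k i, u k - v i ≠ 0) (huvc : ∀ k i, u k - v i - c ≠ 0) :
    KIz c z v u * det (Matrix.of fun k i : κ => (u k - v i - c)⁻¹) =
      det (Matrix.of fun k i : κ => (u k - v i)⁻¹ - z * (u k - v i - c)⁻¹) := by
  set d : κ → ℂ := fun j => (∏ l, (u j - v l - c)) * ∏ l ∈ Finset.univ.erase j, (u j - u l)⁻¹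
    with hd
  have hne : ∀ j l, l ∈ Finset.univ.erase j → u j - u l ≠ 0 := fun j l hl =>
    sub_ne_zero.2 fun h => (Finset.mem_erase.1 hl).1 (hu h).symm
  have hd0 : ∏ j, d j ≠ 0 := by
    refine Finset.prod_ne_zero_iff.2 fun j _ => mul_ne_zero ?_ ?_
    · exact Finset.prod_ne_zero_iff.2 fun l _ => huvc j l
    · exact Finset.prod_ne_zero_iff.2 fun l hl => inv_ne_zero (hne j l hl)
  have key : (Matrix.of fun j k : κ =>
      -z * (if j = k then 1 else 0) +
      (∏ i, fC c (v i) (u j)) * (∏ i ∈ Finset.univ.erase j, fC c (u j) (u i))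
        / hC c (u j) (u k)) * (Matrix.diagonal d *
          (Matrix.of fun k i : κ => (u k - v i - c)⁻¹)) =
      Matrix.diagonal d *
        (Matrix.of fun k i : κ => (u k - v i)⁻¹ - z * (u k - v i - c)⁻¹) := by
    ext j i
    rw [Matrix.mul_apply]
    simp only [Matrix.diagonal_mul, Matrix.of_apply, add_mul, Finset.sum_add_distrib]
    have h1 : ∑ k, -z * (if j = k then (1 : ℂ) else 0) * (d k * (u k - v i - c)⁻¹) =
        - z * (d j * (u j - v i - c)⁻¹) := by
      simp
    rw [h1]
    have h := lagrange_prod u (fun l => v l + c) hu (u j + c) (huc j) i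
    have h2 : ∑ k, (∏ i, fC c (v i) (u j)) * (∏ i ∈ Finset.univ.erase j, fC c (u j) (u i))
        / hC c (u j) (u k) * (d k * (u k - v i - c)⁻¹) = d j * (u j - v i)⁻¹ := by
      have e1 : ∀ k, (∏ i, fC c (v i) (u j)) * (∏ i ∈ Finset.univ.erase j, fC c (u j) (u i))
        / hC c (u j) (u k) * (d k * (u k - v i - c)⁻¹) =
        ((∏ i, fC c (v i) (u j)) * (∏ i ∈ Finset.univ.erase j, fC c (u j) (u i)) * c) *
        ((∏ l ∈ Finset.univ.erase k, (u k - u l)⁻¹) * (u j + c - u k)⁻¹ *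
      (∏ l ∈ Finset.univ.erase i, (u k - (v l + c)))) := by
        intro k
        simp only [hd, hC]
        rw [← Finset.mul_prod_erase Finset.univ (fun l => u k - v l - c) (Finset.mem_univ i)]
        have e : ∏ l ∈ Finset.univ.erase i, (u k - (v l + c)) =
          ∏ l ∈ Finset.univ.erase i, (u k - v l - c) :=
          Finset.prod_congr rfl fun l _ => by ring
        rw [e]
        have := huvc k i
        have e3 : u j + c - u k = u j - u k + c := by ring
        have : u j - u k + c ≠ 0 := by
          rw [← e3]; exact sub_ne_zero.2 (huc j k)
        rw [e3]
        field_simp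
      rw [Finset.sum_congr rfl fun k _ => e1 k, ← Finset.mul_sum]
      set T0 := ∑ k, (∏ l ∈ Finset.univ.erase k, (u k - u l)⁻¹) * (u j + c - u k)⁻¹ *
        (∏ l ∈ Finset.univ.erase i, (u k - (v l + c)))
      rw [← Finset.mul_prod_erase Finset.univ (fun k => u j + c - u k) (Finset.mem_univ j)] at h
      have hP : ∏ k ∈ Finset.univ.erase j, fC c (u j) (u k) =
          (∏ k ∈ Finset.univ.erase j, (u j + c - u k)) *
            ∏ k ∈ Finset.univ.erase j, (u j - u k)⁻¹ := by
        rw [← Finset.prod_mul_distrib]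
        refine Finset.prod_congr rfl fun k _ => ?_
        simp only [fC]; rw [div_eq_mul_inv]; ring
      have hQ : ∏ l, fC c (v l) (u j) = (∏ l, (u j - v l - c)) * ∏ l, (u j - v l)⁻¹ := by
        rw [← Finset.prod_mul_distrib]
        refine Finset.prod_congr rfl fun k _ => ?_
        simp only [fC]
        have h1 := huv j k
        have h2 : v k - u j ≠ 0 := by
          intro h; apply h1; linear_combination -h
        rw [← div_eq_mul_inv, div_eq_div_iff h2 h1]; ring
      have hR : ∏ l ∈ Finset.univ.erase i, (u j + c - (v l + c)) =
          ∏ l ∈ Finset.univ.erase i, (u j - v l) :=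
        Finset.prod_congr rfl fun l _ => by ring
      have hS : (∏ l, (u j - v l)⁻¹) * ∏ l ∈ Finset.univ.erase i, (u j - v l) =
          (u j - v i)⁻¹ := by
        rw [← Finset.mul_prod_erase Finset.univ (fun l => (u j - v l)⁻¹) (Finset.mem_univ i),
          mul_assoc, ← Finset.prod_mul_distrib, Finset.prod_eq_one, mul_one]
        intro l _
        exact inv_mul_cancel₀ (huv j l)
      rw [hR] at h
      rw [hP, hQ, ← hS, ← h]
      simp only [hd]
      ring
    rw [h2]; ring
  have h2 := congrArg det key
  rw [det_mul, det_mul, det_mul, det_diagonal] at h2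
  unfold KIz
  apply mul_left_cancel₀ hd0
  linear_combination h2

/-- Convenient form of the genericity hypothesis. -/
structure Good (c : ℂ) {n m : ℕ} (u : Fin n → ℂ) (v : Fin m → ℂ) : Prop where
  uu : ∀ i j, i ≠ j → u i - u j ≠ 0 ∧ u i - u j ≠ c
  vv : ∀ i j, i ≠ j → v i - v j ≠ 0 ∧ v i - v j ≠ c
  uv : ∀ i j, u i - v j ≠ 0 ∧ u i - v j ≠ c ∧ u i - v j ≠ -c

theorem Good.swap {c : ℂ} {n m : ℕ} {u : Fin n → ℂ} {v : Fin m → ℂ} (h : Good c u v) :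
    Good (-c) v u where
  uu i j hij := ⟨(h.vv i j hij).1, fun e => (h.vv j i hij.symm).2 (by linear_combination -e)⟩
  vv i j hij := ⟨(h.uu i j hij).1, fun e => (h.uu j i hij.symm).2 (by linear_combination -e)⟩
  uv i j := ⟨fun e => (h.uv j i).1 (by linear_combination -e),
    fun e => (h.uv j i).2.1 (by linear_combination -e),
    fun e => (h.uv j i).2.2 (by linear_combination -e)⟩

theorem square_case (c z : ℂ) (hc : c ≠ 0) {n : ℕ} (u v : Fin n → ℂ) (h : Good c u v) :
    KIz (-c) z u v = KIz c z v u := by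
  have inj : ∀ {c : ℂ} {u v : Fin n → ℂ}, Good c u v → Function.Injective u := by
    intro c u v h i j hij
    by_contra hne
    exact (h.uu i j hne).1 (sub_eq_zero.2 hij)
  have shift : ∀ {c : ℂ} {u v : Fin n → ℂ}, c ≠ 0 → Good c u v → ∀ j k, u j + c ≠ u k := by
    intro c u v hc h j k e
    by_cases hjk : k = j
    · subst hjk; exact hc (by linear_combination e)
    · exact (h.uu k j hjk).2 (by linear_combination -e)
  have h1 := square_ratio c z hc u v (inj h) (shift hc h) (fun k i => (h.uv k i).1)
    (fun k i => sub_ne_zero.2 (h.uv k i).2.1)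
  have h' := h.swap
  have hc' : -c ≠ 0 := neg_ne_zero.2 hc
  have h2 := square_ratio (-c) z hc' v u (inj h') (shift hc' h') (fun k i => (h'.uv k i).1)
    (fun k i => sub_ne_zero.2 (h'.uv k i).2.1)
  have hW : (Matrix.of fun k i : Fin n => (v k - u i - -c)⁻¹) =
      -(Matrix.of fun k i : Fin n => (u k - v i - c)⁻¹)ᵀ := by
    ext k i
    simp only [Matrix.of_apply, Matrix.neg_apply, Matrix.transpose_apply]
    rw [← inv_neg]; congr 1; ring
  have hG : (Matrix.of fun k i : Fin n => (v k - u i)⁻¹ - z * (v k - u i - -c)⁻¹) =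
      -(Matrix.of fun k i : Fin n => (u k - v i)⁻¹ - z * (u k - v i - c)⁻¹)ᵀ := by
    ext k i
    simp only [Matrix.of_apply, Matrix.neg_apply, Matrix.transpose_apply]
    have e1 : v k - u i - -c = -(u i - v k - c) := by ring
    have e2 : v k - u i = -(u i - v k) := by ring
    rw [e1, e2, inv_neg, inv_neg]; ring
  rw [hW, hG, det_neg, det_neg, det_transpose, det_transpose, ← h1] at h2
  have hdet : det (Matrix.of fun k i : Fin n => (u k - v i - c)⁻¹) ≠ 0 := by
    have := cauchy_det_ne u (fun i => v i + c) (inj h)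
      (fun i j hij => inj h' (add_right_cancel hij))
      (fun k i e => (h.uv k i).2.1 (by linear_combination e))
    simpa only [sub_add_eq_sub_sub] using this
  have hs : ((-1 : ℂ)) ^ Fintype.card (Fin n) ≠ 0 := pow_ne_zero _ (by norm_num)
  apply mul_right_cancel₀ hdet
  apply mul_left_cancel₀ hs
  linear_combination h2

theorem ev_ne_cobounded (a : ℂ) : ∀ᶠ x in Bornology.cobounded ℂ, x ≠ a :=
  Bornology.eventually_ne_cobounded a

theorem tendsto_inv_sub (a : ℂ) :
    Tendsto (fun x : ℂ => (x - a)⁻¹) (Bornology.cobounded ℂ) (𝓝 0) := by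
  refine tendsto_inv₀_cobounded.comp ?_
  simp [sub_eq_add_neg]

theorem tendsto_fC_left (c a : ℂ) :
    Tendsto (fun x : ℂ => fC c x a) (Bornology.cobounded ℂ) (𝓝 1) := by
  have h := ((tendsto_inv_sub a).const_mul c).const_add 1
  simp only [mul_zero, add_zero] at h
  refine h.congr' ?_
  filter_upwards [ev_ne_cobounded a] with x hx
  have : x - a ≠ 0 := sub_ne_zero.2 hx
  unfold fC; field_simp

theorem tendsto_fC_right (c a : ℂ) :
    Tendsto (fun x : ℂ => fC c a x) (Bornology.cobounded ℂ) (𝓝 1) := by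
  refine (tendsto_fC_left (-c) a).congr fun x => ?_
  unfold fC
  rw [← neg_div_neg_eq]; congr 1 <;> ring

theorem tendsto_hC_left (c a : ℂ) :
    Tendsto (fun x : ℂ => (hC c x a)⁻¹) (Bornology.cobounded ℂ) (𝓝 0) := by
  have h := (tendsto_inv_sub (a - c)).const_mul c
  rw [mul_zero] at h
  refine h.congr fun x => ?_
  unfold hC
  rw [inv_div, div_eq_mul_inv]; congr 2; ring

theorem tendsto_hC_right (c a : ℂ) :
    Tendsto (fun x : ℂ => (hC c a x)⁻¹) (Bornology.cobounded ℂ) (𝓝 0) := by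
  refine (tendsto_hC_left (-c) a).congr fun x => ?_
  unfold hC
  rw [← neg_div_neg_eq]; congr 2 <;> ring

theorem tendsto_K_left (c z : ℂ) {n m : ℕ} (u : Fin n → ℂ) (v : Fin m → ℂ) :
    Tendsto (fun x : ℂ => KIz c z (Fin.cons x v : Fin (m+1) → ℂ) u) (Bornology.cobounded ℂ)
      (𝓝 (KIz c z v u)) := by
  unfold KIz
  refine ((continuous_id.matrix_det).tendsto _).comp ?_
  refine tendsto_pi_nhds.2 fun j => tendsto_pi_nhds.2 fun k => ?_
  simp only [Matrix.of_apply, Fin.prod_univ_succ, Fin.cons_zero, Fin.cons_succ]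
  refine Tendsto.const_add _ (Tendsto.div_const (Tendsto.mul_const _ ?_) _)
  simpa using (tendsto_fC_left c (u j)).mul_const (∏ i, fC c (v i) (u j))

theorem erase_prod_zero {m : ℕ} (F : Fin (m+1) → ℂ) :
    ∏ i ∈ Finset.univ.erase 0, F i = ∏ i, F (Fin.succ i) := by
  have : (Finset.univ.erase (0 : Fin (m+1))) = Finset.univ.map (Fin.succEmb m) := by
    ext i
    refine Fin.cases ?_ (fun i => ?_) i <;> simp
  rw [this, Finset.prod_map]; rfl

theorem erase_prod_succ {m : ℕ} (F : Fin (m+1) → ℂ) (j : Fin m) :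
    ∏ i ∈ Finset.univ.erase (Fin.succ j), F i =
      F 0 * ∏ i ∈ Finset.univ.erase j, F (Fin.succ i) := by
  have : (Finset.univ.erase (Fin.succ j)) =
      insert 0 ((Finset.univ.erase j).map (Fin.succEmb m)) := by
    ext i
    refine Fin.cases ?_ (fun i => ?_) i <;> simp [Fin.succ_ne_zero, eq_comm]
  rw [this, Finset.prod_insert (by simp), Finset.prod_map]; rfl

theorem tendsto_K_right (c z : ℂ) (hc : c ≠ 0) {n m : ℕ} (u : Fin n → ℂ) (v : Fin m → ℂ) :
    Tendsto (fun x : ℂ => KIz c z u (Fin.cons x v : Fin (m+1) → ℂ)) (Bornology.cobounded ℂ)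
      (𝓝 ((1 - z) * KIz c z u v)) := by
  set M : Matrix (Fin m) (Fin m) ℂ := Matrix.of fun j k =>
    -z * (if j = k then 1 else 0) +
      (∏ i, fC c (u i) (v j)) * (∏ i ∈ Finset.univ.erase j, fC c (v j) (v i))
        / hC c (v j) (v k) with hM
  set B : Matrix (Fin (m+1)) (Fin (m+1)) ℂ :=
    Matrix.of (Fin.cons (Fin.cons (1 - z) 0) fun j => Fin.cons 0 (M j)) with hB
  have hdet : det B = (1 - z) * KIz c z u v := by
    rw [det_succ_row_zero, Fin.sum_univ_succ]
    have e : B.submatrix Fin.succ (Fin.succAbove 0) = M := by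
      ext j k
      simp [hB]
    rw [e]
    have e0 : B 0 0 = 1 - z := by simp [hB]
    have e1 : ∀ i : Fin m, B 0 i.succ = 0 := by intro i; simp [hB]
    simp only [e0, e1]
    simp [KIz, hM]
  rw [← hdet]
  unfold KIz
  refine ((continuous_id.matrix_det).tendsto _).comp ?_
  refine tendsto_pi_nhds.2 fun j => tendsto_pi_nhds.2 fun k => ?_
  refine Fin.cases ?_ (fun j => ?_) j <;> refine Fin.cases ?_ (fun k => ?_) k <;>
    simp only [Matrix.of_apply, Fin.cons_zero, Fin.cons_succ, hB, erase_prod_zero,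
      erase_prod_succ, div_eq_mul_inv, Pi.zero_apply]
  · have h1 : Tendsto (fun x : ℂ => ∏ i, fC c (u i) x) (Bornology.cobounded ℂ) (𝓝 1) := by
      simpa using tendsto_finsetProd Finset.univ fun i _ => tendsto_fC_right c (u i)
    have h2 : Tendsto (fun x : ℂ => ∏ i, fC c x (v i)) (Bornology.cobounded ℂ) (𝓝 1) := by
      simpa using tendsto_finsetProd Finset.univ fun i _ => tendsto_fC_left c (v i)
    have h3 : ∀ x, hC c x x = 1 := by intro x; simp [hC, hc]
    have := (h1.mul h2).const_add (-z)
    simp only [h3, if_true, mul_one, inv_one]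
    convert this using 2
    ring
  · have h1 : Tendsto (fun x : ℂ => ∏ i, fC c (u i) x) (Bornology.cobounded ℂ) (𝓝 1) := by
      simpa using tendsto_finsetProd Finset.univ fun i _ => tendsto_fC_right c (u i)
    have h2 : Tendsto (fun x : ℂ => ∏ i, fC c x (v i)) (Bornology.cobounded ℂ) (𝓝 1) := by
      simpa using tendsto_finsetProd Finset.univ fun i _ => tendsto_fC_left c (v i)
    simpa [(Fin.succ_ne_zero k).symm] using (h1.mul h2).mul (tendsto_hC_left c (v k))
  · have h1 := ((tendsto_fC_right c (v j)).mul_const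
      (∏ i ∈ Finset.univ.erase j, fC c (v j) (v i))).const_mul (∏ i, fC c (u i) (v j))
    simpa [Fin.succ_ne_zero j] using h1.mul (tendsto_hC_right c (v j))
  · have h1 := ((((tendsto_fC_right c (v j)).mul_const
      (∏ i ∈ Finset.univ.erase j, fC c (v j) (v i))).const_mul
      (∏ i, fC c (u i) (v j))).mul_const (hC c (v j) (v k))⁻¹).const_add
      (-z * (if j = k then 1 else 0))
    simpa [hM, div_eq_mul_inv] using h1

theorem Good.cons_eventually {c : ℂ} {n m : ℕ} {u : Fin n → ℂ} {v : Fin m → ℂ}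
    (h : Good c u v) : ∀ᶠ x in Bornology.cobounded ℂ,
      Good c u (Fin.cons x v : Fin (m+1) → ℂ) := by
  have h1 : ∀ᶠ x in Bornology.cobounded ℂ, ∀ i, x ≠ v i ∧ x ≠ v i + c ∧ x ≠ v i - c :=
    eventually_all.2 fun i => (ev_ne_cobounded _).and
      ((ev_ne_cobounded _).and (ev_ne_cobounded _))
  have h2 : ∀ᶠ x in Bornology.cobounded ℂ, ∀ i, x ≠ u i ∧ x ≠ u i + c ∧ x ≠ u i - c :=
    eventually_all.2 fun i => (ev_ne_cobounded _).and
      ((ev_ne_cobounded _).and (ev_ne_cobounded _))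
  filter_upwards [h1, h2] with x h1 h2
  refine ⟨h.uu, ?_, ?_⟩
  · intro i j
    refine Fin.cases ?_ (fun i => ?_) i <;> refine Fin.cases ?_ (fun j => ?_) j <;>
      simp only [Fin.cons_zero, Fin.cons_succ]
    · intro h; exact absurd rfl h
    · intro _
      exact ⟨fun e => (h1 j).1 (by linear_combination e),
        fun e => (h1 j).2.1 (by linear_combination e)⟩
    · intro _
      exact ⟨fun e => (h1 i).1 (by linear_combination -e),
        fun e => (h1 i).2.2 (by linear_combination -e)⟩
    · intro hij
      exact h.vv i j fun e => hij (congrArg _ e)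
  · intro i j
    refine Fin.cases ?_ (fun j => ?_) j <;> simp only [Fin.cons_zero, Fin.cons_succ]
    · exact ⟨fun e => (h2 i).1 (by linear_combination -e),
        fun e => (h2 i).2.2 (by linear_combination -e),
        fun e => (h2 i).2.1 (by linear_combination -e)⟩
    · exact h.uv i j

theorem continuous_K (c : ℂ) {n m : ℕ} (u : Fin n → ℂ) (v : Fin m → ℂ) :
    Continuous fun z : ℂ => KIz c z v u := by
  unfold KIz
  refine Continuous.matrix_det ?_
  refine continuous_pi fun j => continuous_pi fun k => ?_
  simp only [Matrix.of_apply]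
  fun_prop

theorem ne_one_case (c : ℂ) (hc : c ≠ 0) (z : ℂ) (hz : z ≠ 1) {n : ℕ} (u : Fin n → ℂ) (k : ℕ) :
    ∀ (m : ℕ) (v : Fin m → ℂ), m + k = n → Good c u v →
      (1 - z) ^ n * KIz (-c) z u v = (1 - z) ^ m * KIz c z v u := by
  induction k with
  | zero =>
    intro m v hm h
    obtain rfl : m = n := hm
    rw [square_case c z hc u v h]
  | succ k ih =>
    intro m v hm h
    have hl := (tendsto_K_right (-c) z (neg_ne_zero.2 hc) u v).const_mul ((1 - z) ^ n)
    have hr := (tendsto_K_left c z u v).const_mul ((1 - z) ^ (m + 1))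
    have heq := tendsto_nhds_unique_of_eventuallyEq hl hr
      (h.cons_eventually.mono fun x hx => ih (m + 1) _ (by omega) hx)
    have h1 : 1 - z ≠ 0 := sub_ne_zero.2 hz.symm
    apply mul_left_cancel₀ h1
    rw [pow_succ] at heq
    linear_combination heq

theorem le_case (c : ℂ) (hc : c ≠ 0) (z : ℂ) {n m : ℕ} (hmn : m ≤ n) (u : Fin n → ℂ)
    (v : Fin m → ℂ) (h : Good c u v) :
    (1 - z) ^ n * KIz (-c) z u v = (1 - z) ^ m * KIz c z v u := by
  have hfun : (fun z : ℂ => (1 - z) ^ n * KIz (-c) z u v) =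
      fun z : ℂ => (1 - z) ^ m * KIz c z v u := by
    refine Continuous.ext_on (s := {1}ᶜ) (dense_compl_singleton 1) ?_ ?_ ?_
    · exact ((continuous_const.sub continuous_id).pow n).mul (continuous_K _ _ _)
    · exact ((continuous_const.sub continuous_id).pow m).mul (continuous_K _ _ _)
    · intro z hz
      exact ne_one_case c hc z hz u (n - m) m v (by omega) h
  exact congrFun hfun z

theorem good_of_generic {c : ℂ} {n m : ℕ} {u : Fin n → ℂ} {v : Fin m → ℂ}
    (hgen : Generic c (Fin.append u v)) : Good c u v where
  uu i j hij := by
    have := hgen (Fin.castAdd m i) (Fin.castAdd m j)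
      (fun e => hij (Fin.castAdd_injective n m e))
    simp only [Fin.append_left] at this
    exact ⟨this.1, this.2.1⟩
  vv i j hij := by
    have := hgen (Fin.natAdd n i) (Fin.natAdd n j)
      (fun e => hij (Fin.natAdd_injective m n e))
    simp only [Fin.append_right] at this
    exact ⟨this.1, this.2.1⟩
  uv i j := by
    have := hgen (Fin.castAdd m i) (Fin.natAdd n j) (by
      intro e
      have := congrArg Fin.val e
      simp only [Fin.val_castAdd, Fin.val_natAdd] at this
      omega)
    simp only [Fin.append_left, Fin.append_right] at this
    exact ⟨this.1, this.2.1, this.2.2.1⟩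

/-- Relation between the conjugated and the ordinary modified Izergin determinants. -/
theorem stmt13
    (c : ℂ) (hc : c ≠ 0) (z : ℂ) (n m : ℕ)
    (u : Fin n → ℂ) (v : Fin m → ℂ)
    (hgen : Generic c (Fin.append u v)) :
    (1 - z) ^ n * KIzBar c z u v = (1 - z) ^ m * KIz c z v u := by
  have h := good_of_generic hgen
  unfold KIzBar
  rcases le_total m n with hmn | hmn
  · exact le_case c hc z hmn u v h
  · have := le_case (-c) (neg_ne_zero.2 hc) z hmn v u h.swap
    rw [neg_neg] at this
    exact this.symm
end
end

section
/- For all nonzero z ∈ ℂ and generic tuples ū (length n), v̄ (length m): f(v̄, ū)·(1−z)^{n}·K^{(z)}_{n,m}(ū | v̄ + c) = (−z)^{n}·(1−z)^{m}·K^{(1/z)}_{m,n}(v̄ | ū), and f(ū, v̄)·(1−z)^{n}·\bar{K}^{(z)}_{n,m}(ū | v̄ − c) = (−z)^{n}·(1−z)^{m}·\bar{K}^{(1/z)}_{m,n}(v̄ | ū). -/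
open scoped BigOperators

noncomputable section

/-- The nondegeneracy conditions used in the proof. -/
structure GG (c : ℂ) {n m : ℕ} (u : Fin n → ℂ) (v : Fin m → ℂ) : Prop where
  injU : Function.Injective u
  injV : Function.Injective v
  uu : ∀ i k, u i - u k + c ≠ 0
  vv : ∀ i k, v i - v k + c ≠ 0
  vu : ∀ j i, v j - u i ≠ 0
  vuc : ∀ j i, v j - u i + c ≠ 0

/-- The polynomial `∏_{l ≠ i} (X - x_l)`. -/
def pp {n : ℕ} (x : Fin n → ℂ) (i : Fin n) : Polynomial ℂ :=
  Lagrange.nodal (Finset.univ.erase i) x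

lemma pp_eval {n : ℕ} (x : Fin n → ℂ) (i : Fin n) (s : ℂ) :
    (pp x i).eval s = ∏ l ∈ Finset.univ.erase i, (s - x l) := by
  rw [pp, Lagrange.eval_nodal]

lemma pp_eval_div {n : ℕ} (x : Fin n → ℂ) (i : Fin n) (s : ℂ) (h : s - x i ≠ 0) :
    (pp x i).eval s = (∏ l, (s - x l)) * (s - x i)⁻¹ := by
  rw [pp_eval, ← Finset.mul_prod_erase Finset.univ _ (Finset.mem_univ i)]
  field_simp

lemma pp_natDegree {n : ℕ} (x : Fin n → ℂ) (i : Fin n) : (pp x i).natDegree < n := by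
  rw [pp, Lagrange.natDegree_nodal, Finset.card_erase_of_mem (Finset.mem_univ i)]
  have := i.pos
  simp; omega

lemma pp_degree {n : ℕ} (x : Fin n → ℂ) (i : Fin n) : (pp x i).degree < n := by
  rw [pp, Lagrange.degree_nodal, Finset.card_erase_of_mem (Finset.mem_univ i)]
  have := i.pos
  simp; omega

/-- coefficient matrix -/
def coefM {n : ℕ} (x : Fin n → ℂ) : Matrix (Fin n) (Fin n) ℂ :=
  Matrix.of fun k i => (pp x i).coeff k

lemma evalM_eq {n : ℕ} (x t : Fin n → ℂ) :
    (Matrix.of fun j i => (pp x i).eval (t j)) = Matrix.vandermonde t * coefM x := by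
  ext j i
  rw [Matrix.mul_apply, Matrix.of_apply, Polynomial.eval_eq_sum_range' (pp_natDegree x i),
    Finset.sum_range]
  refine Finset.sum_congr rfl fun k _ => ?_
  simp [coefM, Matrix.vandermonde_apply, mul_comm]

lemma coefM_det {n : ℕ} (x : Fin n → ℂ) (hx : Function.Injective x) : (coefM x).det ≠ 0 := by
  have h := congrArg Matrix.det (evalM_eq x x)
  have h2 : (Matrix.of fun j i => (pp x i).eval (x j)) =
      Matrix.diagonal fun i => (pp x i).eval (x i) := by
    ext j i
    by_cases hji : j = i
    · subst hji; simp
    · rw [Matrix.diagonal_apply_ne _ hji, Matrix.of_apply, pp_eval]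
      exact Finset.prod_eq_zero (i := j) (by simp [hji]) (sub_self _)
  rw [h2, Matrix.det_diagonal, Matrix.det_mul] at h
  intro h0
  rw [h0, mul_zero, Finset.prod_eq_zero_iff] at h
  obtain ⟨i, _, hi⟩ := h
  rw [pp_eval, Finset.prod_eq_zero_iff] at hi
  obtain ⟨l, hl, hl0⟩ := hi
  exact (Finset.ne_of_mem_erase hl) (hx (sub_eq_zero.1 hl0)).symm

/-- Cauchy matrix -/
def CM {n : ℕ} (t x : Fin n → ℂ) : Matrix (Fin n) (Fin n) ℂ :=
  Matrix.of fun j i => (t j - x i)⁻¹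

lemma CM_det {n : ℕ} (t x : Fin n → ℂ) (h : ∀ j i, t j - x i ≠ 0) :
    (∏ j, ∏ i, (t j - x i)) * (CM t x).det = (Matrix.vandermonde t).det * (coefM x).det := by
  rw [← Matrix.det_mul, ← evalM_eq, ← Matrix.det_diagonal, ← Matrix.det_mul]
  congr 1
  ext j i
  rw [Matrix.diagonal_mul, Matrix.of_apply, pp_eval_div _ _ _ (h j i), CM, Matrix.of_apply]

lemma CM_det_ne {n : ℕ} (t x : Fin n → ℂ) (h : ∀ j i, t j - x i ≠ 0)
    (ht : Function.Injective t) (hx : Function.Injective x) : (CM t x).det ≠ 0 := by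
  intro h0
  have := CM_det t x h
  rw [h0, mul_zero] at this
  exact mul_ne_zero (Matrix.det_vandermonde_ne_zero_iff.2 ht) (coefM_det x hx) this.symm

lemma KIz_square {n : ℕ} (c : ℂ) (hc : c ≠ 0) (z : ℂ) (x y : Fin n → ℂ)
    (hy : Function.Injective y) (hyy : ∀ i k, y i - y k + c ≠ 0)
    (h0 : ∀ j i, y j - x i ≠ 0) (h1 : ∀ j i, y j - (x i + c) ≠ 0) :
    KIz c z x y * (CM y (fun i => x i + c)).det =
      (CM y x - z • CM y (fun i => x i + c)).det := by
  set w : Fin n → ℂ := fun j => Lagrange.nodalWeight Finset.univ y j with hw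
  have hwne : ∀ j, w j ≠ 0 := fun j =>
    Lagrange.nodalWeight_ne_zero hy.injOn (Finset.mem_univ j)
  set D : Fin n → ℂ := fun j => w j * ∏ l, (y j - (x l + c)) with hD
  have hDne : ∀ j, D j ≠ 0 := fun j =>
    mul_ne_zero (hwne j) (Finset.prod_ne_zero_iff.2 fun l _ => h1 j l)
  set N : Fin n → ℂ := fun j => ∏ l, (y j + c - y l) with hN
  have hM : ∀ j k, (∏ i, fC c (x i) (y j)) * (∏ i ∈ Finset.univ.erase j, fC c (y j) (y i))
        / hC c (y j) (y k) = D j * (∏ l, (y j - x l))⁻¹ * N j * (y j + c - y k)⁻¹ := by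
    intro j k
    have e1 : (∏ i, fC c (x i) (y j)) = (∏ l, (y j - (x l + c))) * (∏ l, (y j - x l))⁻¹ := by
      rw [← Finset.prod_inv_distrib, ← Finset.prod_mul_distrib]
      refine Finset.prod_congr rfl fun i _ => ?_
      have := h0 j i
      have h' : x i - y j ≠ 0 := by rw [← neg_sub]; exact neg_ne_zero.2 this
      rw [fC]; field_simp; ring
    have e2 : (∏ i ∈ Finset.univ.erase j, fC c (y j) (y i)) = w j * N j / c := by
      rw [hN]
      simp only
      rw [← Finset.mul_prod_erase Finset.univ _ (Finset.mem_univ j), hw]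
      simp only [Lagrange.nodalWeight]
      rw [add_sub_cancel_left, mul_left_comm, mul_div_cancel_left₀ _ hc,
        ← Finset.prod_mul_distrib]
      refine Finset.prod_congr rfl fun i _ => ?_
      rw [fC, div_eq_mul_inv, mul_comm]
      congr 1; ring
    have := hyy j k
    have h' : y j + c - y k ≠ 0 := by convert this using 1; ring
    rw [e1, e2, hC, hD]
    field_simp
    ring
  have key : ∀ j i, ∑ k, (D j * (∏ l, (y j - x l))⁻¹ * N j * (y j + c - y k)⁻¹) *
      (D k * (y k - (x i + c))⁻¹) = D j * (y j - x i)⁻¹ := by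
    intro j i
    have hb := Lagrange.eval_interpolate_not_at_node (s := Finset.univ) (v := y) (x := y j + c)
      (fun k => (pp (fun l => x l + c) i).eval (y k)) (by
        intro k _ h
        apply hyy j k
        linear_combination h)
    rw [← Lagrange.eq_interpolate hy.injOn (by simpa using pp_degree (fun l => x l + c) i),
      Lagrange.eval_nodal, pp_eval_div _ _ _ (by
        have := h0 j i
        convert this using 1; ring)] at hb
    have hP : (∏ l, (y j - x l)) ≠ 0 := Finset.prod_ne_zero_iff.2 fun l _ => h0 j l
    have hb2 : (∏ l, (y j - x l)) * (y j - x i)⁻¹ =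
        N j * ∑ k, (y j + c - y k)⁻¹ * (D k * (y k - (x i + c))⁻¹) := by
      convert hb using 2
      · refine Finset.prod_congr rfl fun l _ => ?_
        ring
      · congr 1; ring
      · refine Finset.sum_congr rfl fun k _ => ?_
        rw [pp_eval_div _ _ _ (h1 k i), hD, hw]
        ring
    calc _ = D j * (∏ l, (y j - x l))⁻¹ *
          (N j * ∑ k, (y j + c - y k)⁻¹ * (D k * (y k - (x i + c))⁻¹)) := by
          rw [Finset.mul_sum, Finset.mul_sum]
          exact Finset.sum_congr rfl fun k _ => by ring
      _ = _ := by rw [← hb2]; field_simp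
  have hmat : (Matrix.of fun j k : Fin n =>
    -z * (if j = k then 1 else 0) +
      (∏ i, fC c (x i) (y j)) * (∏ i ∈ Finset.univ.erase j, fC c (y j) (y i))
        / hC c (y j) (y k)) * (Matrix.diagonal D * CM y (fun i => x i + c)) =
      Matrix.diagonal D * (CM y x - z • CM y (fun i => x i + c)) := by
    ext j i
    rw [Matrix.mul_apply, Matrix.diagonal_mul]
    simp only [Matrix.of_apply, Matrix.diagonal_mul, hM, Matrix.sub_apply, Matrix.smul_apply,
      CM, add_mul, Finset.sum_add_distrib, key, smul_eq_mul]
    simp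
    ring
  have hd := congrArg Matrix.det hmat
  rw [Matrix.det_mul, Matrix.det_mul, Matrix.det_mul, Matrix.det_diagonal] at hd
  have hDp : (∏ i, D i) ≠ 0 := Finset.prod_ne_zero_iff.2 fun l _ => hDne l
  apply mul_left_cancel₀ hDp
  rw [← hd, KIz]
  ring

lemma base {n : ℕ} (c : ℂ) (hc : c ≠ 0) (z : ℂ) (hz : z ≠ 0) (u v : Fin n → ℂ)
    (h : GG c u v) :
    (∏ j, ∏ i, fC c (v j) (u i)) * KIz c z u (fun j => v j + c) = (-z) ^ n * KIz c z⁻¹ v u := by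
  have hvuc : ∀ j i, v j + c - u i ≠ 0 := fun j i => by
    convert h.vuc j i using 1; ring
  have A := KIz_square c hc z u (fun j => v j + c)
    (fun a b hab => h.injV (add_right_cancel hab))
    (fun i k => by convert h.vv i k using 1; ring) hvuc
    (fun j i => by convert h.vu j i using 1; ring)
  have B := KIz_square c hc z⁻¹ v u h.injU h.uu
    (fun j i => by rw [← neg_sub]; exact neg_ne_zero.2 (h.vu i j))
    (fun j i => by rw [← neg_sub]; exact neg_ne_zero.2 (hvuc i j))
  have e0 : CM (fun j => v j + c) (fun i => u i + c) = CM v u := by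
    ext j i; simp [CM]
  have e1 : CM u (fun i => v i + c) = -(CM (fun j => v j + c) u).transpose := by
    ext j i
    simp only [CM, Matrix.of_apply, Matrix.neg_apply, Matrix.transpose_apply]
    rw [← inv_neg, neg_sub]
  have e2 : CM u v = -(CM v u).transpose := by
    ext j i
    simp only [CM, Matrix.of_apply, Matrix.neg_apply, Matrix.transpose_apply]
    rw [← inv_neg, neg_sub]
  have e3 : CM u v - z⁻¹ • CM u (fun i => v i + c) =
      z⁻¹ • (CM (fun j => v j + c) u - z • CM v u).transpose := by
    rw [e1, e2]
    ext j i
    simp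
    field_simp
    ring
  rw [e0] at A
  rw [e3, e1, Matrix.det_neg, Matrix.det_smul, Matrix.det_transpose, Matrix.det_transpose,
    ← A] at B
  have c0 := CM_det v u h.vu
  have c1 := CM_det (fun j => v j + c) u hvuc
  have hv : (Matrix.vandermonde fun j => v j + c).det = (Matrix.vandermonde v).det :=
    Matrix.det_vandermonde_add v c
  rw [hv, ← c0] at c1
  have n1 := CM_det_ne (fun j => v j + c) u hvuc
    (fun a b hab => h.injV (add_right_cancel hab)) h.injU
  have hP : (∏ j, ∏ i, (v j - u i)) ≠ 0 :=
    Finset.prod_ne_zero_iff.2 fun j _ => Finset.prod_ne_zero_iff.2 fun i _ => h.vu j i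
  have hf : (∏ j, ∏ i, fC c (v j) (u i)) * (∏ j, ∏ i, (v j - u i)) =
      ∏ j, ∏ i, (v j + c - u i) := by
    rw [← Finset.prod_mul_distrib]
    refine Finset.prod_congr rfl fun j _ => ?_
    rw [← Finset.prod_mul_distrib]
    refine Finset.prod_congr rfl fun i _ => ?_
    have := h.vu j i
    rw [fC]; field_simp; ring
  have hf2 : (∏ j, ∏ i, fC c (v j) (u i)) * (CM (fun j => v j + c) u).det = (CM v u).det := by
    apply mul_left_cancel₀ hP
    rw [← c1, ← hf]; ring
  rw [← hf2] at B
  apply mul_right_cancel₀ n1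
  have hs : ((-1 : ℂ)) ^ n * (-1) ^ n = 1 := by rw [← mul_pow]; simp
  have hzz : z ^ n * z⁻¹ ^ n = 1 := by rw [← mul_pow, mul_inv_cancel₀ hz, one_pow]
  rw [neg_pow z]
  simp only [Fintype.card_fin] at B
  linear_combination (-(z ^ n)) * B - hzz * ((∏ j, ∏ i, fC c (v j) (u i)) *
    KIz c z u (fun j => v j + c) * (CM (fun j => v j + c) u).det)

open Filter Topology Bornology

lemma tend_inv (a c : ℂ) : Tendsto (fun t : ℂ => (t - a + c)⁻¹) (cobounded ℂ) (𝓝 0) := by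
  refine tendsto_inv₀_cobounded.comp ?_
  have : Tendsto (fun t : ℂ => t + (c - a)) (cobounded ℂ) (cobounded ℂ) :=
    tendsto_add_const_cobounded _
  refine this.congr fun t => by ring

lemma ev_ne (a : ℂ) : ∀ᶠ t in cobounded ℂ, t ≠ a := Bornology.eventually_ne_cobounded a

lemma fC_eq_s14 (c : ℂ) {a b : ℂ} (h : a ≠ b) : fC c a b = 1 + c * (a - b + 0)⁻¹ := by
  have := sub_ne_zero.2 h
  rw [fC, add_zero]; field_simp

lemma tend_f1 (c a : ℂ) : Tendsto (fun t : ℂ => fC c t a) (cobounded ℂ) (𝓝 1) := by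
  have h : Tendsto (fun t : ℂ => 1 + c * (t - a + 0)⁻¹) (cobounded ℂ) (𝓝 (1 + c * 0)) :=
    tendsto_const_nhds.add (tendsto_const_nhds.mul (tend_inv a 0))
  rw [mul_zero, add_zero] at h
  refine h.congr' ?_
  filter_upwards [ev_ne a] with t ht
  rw [fC_eq_s14 c ht]

lemma tend_f2 (c a : ℂ) : Tendsto (fun t : ℂ => fC c a t) (cobounded ℂ) (𝓝 1) := by
  refine (tend_f1 (-c) a).congr' ?_
  filter_upwards [ev_ne a] with t ht
  rw [fC_eq_s14 _ ht, fC_eq_s14 _ ht.symm, add_zero, add_zero, ← neg_sub t a, inv_neg]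
  ring

lemma tend_h1 (c a : ℂ) : Tendsto (fun t : ℂ => (hC c t a)⁻¹) (cobounded ℂ) (𝓝 0) := by
  have h : Tendsto (fun t : ℂ => c * (t - a + c)⁻¹) (cobounded ℂ) (𝓝 (c * 0)) :=
    tendsto_const_nhds.mul (tend_inv a c)
  rw [mul_zero] at h
  refine h.congr fun t => ?_
  rw [hC, inv_div, div_eq_mul_inv]

lemma tend_h2 (c a : ℂ) : Tendsto (fun t : ℂ => (hC c a t)⁻¹) (cobounded ℂ) (𝓝 0) := by
  refine (tend_h1 (-c) a).congr fun t => ?_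
  rw [hC, hC, inv_div, inv_div, ← neg_div_neg_eq]
  congr 1 <;> ring

lemma tend_det {α : Type*} {l : Filter α} {n : ℕ} (A : α → Matrix (Fin n) (Fin n) ℂ)
    (B : Matrix (Fin n) (Fin n) ℂ) (h : ∀ i j, Tendsto (fun t => A t i j) l (𝓝 (B i j))) :
    Tendsto (fun t => (A t).det) l (𝓝 B.det) := by
  have hA : Tendsto A l (𝓝 B) := tendsto_pi_nhds.2 fun i => tendsto_pi_nhds.2 fun j => h i j
  exact ((continuous_id.matrix_det (R := ℂ)).tendsto B).comp hA

lemma tend_K1 {n m : ℕ} (c z : ℂ) (x : Fin n → ℂ) (y : Fin m → ℂ) :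
    Tendsto (fun t => KIz c z (Fin.cons t x : Fin (n + 1) → ℂ) y) (cobounded ℂ)
      (𝓝 (KIz c z x y)) := by
  unfold KIz
  refine tend_det _ _ fun j k => ?_
  simp only [Matrix.of_apply, Fin.prod_univ_succ, Fin.cons_zero, Fin.cons_succ]
  refine tendsto_const_nhds.add (Tendsto.div_const (Tendsto.mul_const _ ?_) _)
  simpa using (tend_f1 c (y j)).mul_const (∏ i, fC c (x i) (y j))

lemma prod_erase_ite {n : ℕ} (j : Fin n) (g : Fin n → ℂ) :
    ∏ i ∈ Finset.univ.erase j, g i = ∏ i, if i = j then 1 else g i := by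
  rw [← Finset.mul_prod_erase Finset.univ _ (Finset.mem_univ j), if_pos rfl, one_mul]
  exact Finset.prod_congr rfl fun i hi => by rw [if_neg (Finset.ne_of_mem_erase hi)]

lemma tend_K2 {n m : ℕ} (c : ℂ) (hc : c ≠ 0) (z : ℂ) (x : Fin n → ℂ) (y : Fin m → ℂ) :
    Tendsto (fun t => KIz c z x (Fin.cons t y : Fin (m + 1) → ℂ)) (cobounded ℂ)
      (𝓝 ((1 - z) * KIz c z x y)) := by
  set B : Matrix (Fin m) (Fin m) ℂ := Matrix.of fun j k =>
    -z * (if j = k then 1 else 0) +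
      (∏ i, fC c (x i) (y j)) * (∏ i ∈ Finset.univ.erase j, fC c (y j) (y i))
        / hC c (y j) (y k) with hB
  set B' : Matrix (Fin (m + 1)) (Fin (m + 1)) ℂ := Matrix.of
    (Fin.cons (Fin.cons (1 - z) fun _ => 0) fun j => Fin.cons 0 (B j)) with hB'
  have hdet : B'.det = (1 - z) * KIz c z x y := by
    rw [Matrix.det_succ_row_zero, Fin.sum_univ_succ]
    have hsub : B'.submatrix Fin.succ (Fin.succAbove 0) = B := by
      ext j k; simp [hB']
    rw [hsub]
    simp [hB', KIz, hB]
  rw [← hdet]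
  unfold KIz
  refine tend_det _ _ fun j k => ?_
  have hrow0 : Tendsto (fun t : ℂ => (∏ i, fC c (x i) t) * ∏ i, fC c t (y i)) (cobounded ℂ)
      (𝓝 1) := by
    have h1 := tendsto_finsetProd Finset.univ fun i _ => tend_f2 c (x i)
    have h2 := tendsto_finsetProd Finset.univ fun i _ => tend_f1 c (y i)
    simpa using h1.mul h2
  simp only [Matrix.of_apply, prod_erase_ite]
  refine Fin.cases ?_ (fun j => ?_) j <;> refine Fin.cases ?_ (fun k => ?_) k
  · simp only [Fin.prod_univ_succ, Fin.cons_zero, Fin.cons_succ, if_true, Fin.succ_ne_zero,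
      if_false, one_mul, hC, sub_self, zero_add, div_self hc, div_one, mul_one, hB',
      Matrix.of_apply]
    have := (tendsto_const_nhds (x := -z)).add hrow0
    convert this using 2
    ring
  · simp only [Fin.prod_univ_succ, Fin.cons_zero, Fin.cons_succ, if_true, Fin.succ_ne_zero,
      if_false, one_mul, hB', Matrix.of_apply, (Fin.succ_ne_zero _).symm, mul_zero, zero_add,
      div_eq_mul_inv]
    simpa using hrow0.mul (tend_h1 c (y k))
  · simp only [Fin.prod_univ_succ, Fin.cons_zero, Fin.cons_succ, Fin.succ_ne_zero,
      if_false, hB', Matrix.of_apply, (Fin.succ_ne_zero _).symm, mul_zero, zero_add,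
      div_eq_mul_inv, Fin.succ_inj]
    have := ((tend_f2 c (y j)).mul_const (∏ i, if i = j then 1 else fC c (y j) (y i))).const_mul
      (∏ i, fC c (x i) (y j))
    simpa using this.mul (tend_h2 c (y j))
  · simp only [Fin.prod_univ_succ, Fin.cons_zero, Fin.cons_succ, 
      if_false, hB', hB, Matrix.of_apply, (Fin.succ_ne_zero _).symm, prod_erase_ite,
      Fin.succ_inj]
    refine tendsto_const_nhds.add (Tendsto.div_const (Tendsto.const_mul _ ?_) _)
    simpa using (tend_f2 c (y j)).mul_const (∏ i, if i = j then 1 else fC c (y j) (y i))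

lemma ev_ne' {n : ℕ} (a : Fin n → ℂ) : ∀ᶠ t in cobounded ℂ, ∀ i, t ≠ a i :=
  eventually_all.2 fun i => ev_ne (a i)

lemma GG.consU {n m : ℕ} {c : ℂ} (hc : c ≠ 0) {u : Fin n → ℂ} {v : Fin m → ℂ} (h : GG c u v) :
    ∀ᶠ t in cobounded ℂ, GG c (Fin.cons t u : Fin (n + 1) → ℂ) v := by
  filter_upwards [ev_ne' u, ev_ne' fun i => u i - c, ev_ne' fun i => u i + c, ev_ne' v,
    ev_ne' fun i => v i + c] with t h1 h2 h3 h4 h5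
  refine ⟨Fin.cons_injective_iff.2 ⟨?_, h.injU⟩, h.injV, ?_, h.vv, ?_, ?_⟩
  · rintro ⟨i, hi⟩; exact h1 i hi.symm
  · intro i k
    refine Fin.cases ?_ (fun i => ?_) i <;> refine Fin.cases ?_ (fun k => ?_) k <;>
      simp only [Fin.cons_zero, Fin.cons_succ]
    · simpa using hc
    · intro e; exact h2 k (by linear_combination e)
    · intro e; exact h3 i (by linear_combination -e)
    · exact h.uu i k
  · intro j i
    refine Fin.cases ?_ (fun i => ?_) i <;> simp only [Fin.cons_zero, Fin.cons_succ]
    · intro e; exact h4 j (by linear_combination -e)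
    · exact h.vu j i
  · intro j i
    refine Fin.cases ?_ (fun i => ?_) i <;> simp only [Fin.cons_zero, Fin.cons_succ]
    · intro e; exact h5 j (by linear_combination -e)
    · exact h.vuc j i

lemma GG.consV {n m : ℕ} {c : ℂ} (hc : c ≠ 0) {u : Fin n → ℂ} {v : Fin m → ℂ} (h : GG c u v) :
    ∀ᶠ t in cobounded ℂ, GG c u (Fin.cons t v : Fin (m + 1) → ℂ) := by
  filter_upwards [ev_ne' v, ev_ne' fun i => v i - c, ev_ne' fun i => v i + c, ev_ne' u,
    ev_ne' fun i => u i - c] with t h1 h2 h3 h4 h5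
  refine ⟨h.injU, Fin.cons_injective_iff.2 ⟨?_, h.injV⟩, h.uu, ?_, ?_, ?_⟩
  · rintro ⟨i, hi⟩; exact h1 i hi.symm
  · intro i k
    refine Fin.cases ?_ (fun i => ?_) i <;> refine Fin.cases ?_ (fun k => ?_) k <;>
      simp only [Fin.cons_zero, Fin.cons_succ]
    · simpa using hc
    · intro e; exact h2 k (by linear_combination e)
    · intro e; exact h3 i (by linear_combination -e)
    · exact h.vv i k
  · intro j i
    refine Fin.cases ?_ (fun j => ?_) j <;> simp only [Fin.cons_zero, Fin.cons_succ]
    · intro e; exact h4 i (by linear_combination e)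
    · exact h.vu j i
  · intro j i
    refine Fin.cases ?_ (fun j => ?_) j <;> simp only [Fin.cons_zero, Fin.cons_succ]
    · intro e; exact h5 i (by linear_combination e)
    · exact h.vuc j i

/-- The inversion identity. -/
def Inv14 (c z : ℂ) {n m : ℕ} (u : Fin n → ℂ) (v : Fin m → ℂ) : Prop :=
  (∏ j, ∏ i, fC c (v j) (u i)) * (1 - z) ^ n * KIz c z u (fun j => v j + c)
        = (-z) ^ n * (1 - z) ^ m * KIz c z⁻¹ v u

lemma stepU {n m : ℕ} (c : ℂ) (hc : c ≠ 0) (z : ℂ) (hz : z ≠ 0) (hz1 : z ≠ 1)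
    (u : Fin n → ℂ) (v : Fin m → ℂ)
    (h : ∀ᶠ t in cobounded ℂ, Inv14 c z (Fin.cons t u : Fin (n + 1) → ℂ) v) :
    Inv14 c z u v := by
  unfold Inv14 at h ⊢
  have hf : Tendsto (fun t => ∏ j, ∏ i, fC c (v j) ((Fin.cons t u : Fin (n + 1) → ℂ) i))
      (cobounded ℂ) (𝓝 (∏ j, ∏ i, fC c (v j) (u i))) := by
    refine tendsto_finsetProd _ fun j _ => ?_
    simp only [Fin.prod_univ_succ, Fin.cons_zero, Fin.cons_succ]
    simpa using (tend_f2 c (v j)).mul_const (∏ i, fC c (v j) (u i))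
  have L := (hf.mul_const ((1 - z) ^ (n + 1))).mul (tend_K1 c z u (fun j => v j + c))
  have R := (tend_K2 c hc z⁻¹ v u).const_mul ((-z) ^ (n + 1) * (1 - z) ^ m)
  have E := tendsto_nhds_unique (L.congr' h) R
  apply mul_left_cancel₀ (sub_ne_zero.2 hz1.symm)
  have hzz : z * z⁻¹ = 1 := mul_inv_cancel₀ hz
  linear_combination E + (-z) ^ n * (1 - z) ^ m * KIz c z⁻¹ v u * hzz

lemma stepV {n m : ℕ} (c : ℂ) (hc : c ≠ 0) (z : ℂ) (hz1 : z ≠ 1)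
    (u : Fin n → ℂ) (v : Fin m → ℂ)
    (h : ∀ᶠ t in cobounded ℂ, Inv14 c z u (Fin.cons t v : Fin (m + 1) → ℂ)) :
    Inv14 c z u v := by
  unfold Inv14 at h ⊢
  have hf : Tendsto (fun t => ∏ j, ∏ i, fC c ((Fin.cons t v : Fin (m + 1) → ℂ) j) (u i))
      (cobounded ℂ) (𝓝 (∏ j, ∏ i, fC c (v j) (u i))) := by
    simp only [Fin.prod_univ_succ, Fin.cons_zero, Fin.cons_succ]
    have := tendsto_finsetProd Finset.univ fun i _ => tend_f1 c (u i)
    simpa using this.mul_const (∏ j, ∏ i, fC c (v j) (u i))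
  have hK := (tend_K2 c hc z u (fun j => v j + c)).comp (tendsto_add_const_cobounded c)
  have hK2 : Tendsto (fun t => KIz c z u (fun j => (Fin.cons t v : Fin (m + 1) → ℂ) j + c))
      (cobounded ℂ) (𝓝 ((1 - z) * KIz c z u (fun j => v j + c))) := by
    refine hK.congr fun t => ?_
    simp only [Function.comp]
    congr 1
    ext j
    refine Fin.cases ?_ (fun j => ?_) j <;> simp
  have L := (hf.mul_const ((1 - z) ^ n)).mul hK2
  have R := (tend_K1 c z⁻¹ v u).const_mul ((-z) ^ n * (1 - z) ^ (m + 1))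
  have E := tendsto_nhds_unique (L.congr' h) R
  apply mul_left_cancel₀ (sub_ne_zero.2 hz1.symm)
  linear_combination E

lemma inv_le {c : ℂ} (hc : c ≠ 0) {z : ℂ} (hz : z ≠ 0) (hz1 : z ≠ 1) (d : ℕ) :
    ∀ (n m : ℕ), m = n + d → ∀ (u : Fin n → ℂ) (v : Fin m → ℂ), GG c u v → Inv14 c z u v := by
  induction d with
  | zero =>
    intro n m hm u v h
    obtain rfl : m = n := by omega
    have := base c hc z hz u v h
    unfold Inv14
    linear_combination (1 - z) ^ m * this
  | succ d ih =>
    intro n m hm u v h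
    refine stepU c hc z hz hz1 u v ?_
    filter_upwards [h.consU hc] with t ht
    exact ih (n + 1) m (by omega) _ _ ht

lemma inv_ge {c : ℂ} (hc : c ≠ 0) {z : ℂ} (hz : z ≠ 0) (hz1 : z ≠ 1) (d : ℕ) :
    ∀ (n m : ℕ), n = m + d → ∀ (u : Fin n → ℂ) (v : Fin m → ℂ), GG c u v → Inv14 c z u v := by
  induction d with
  | zero =>
    intro n m hm u v h
    exact inv_le hc hz hz1 0 n m (by omega) u v h
  | succ d ih =>
    intro n m hm u v h
    refine stepV c hc z hz1 u v ?_
    filter_upwards [h.consV hc] with t ht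
    exact ih n (m + 1) (by omega) _ _ ht

lemma tend_Kz {n m : ℕ} (c a : ℂ) (x : Fin n → ℂ) (y : Fin m → ℂ) :
    Tendsto (fun z => KIz c z x y) (𝓝 a) (𝓝 (KIz c a x y)) := by
  unfold KIz
  refine tend_det _ _ fun j k => ?_
  simp only [Matrix.of_apply]
  exact ((tendsto_id.neg).mul_const _).add_const _

lemma inv_all {n m : ℕ} {c : ℂ} (hc : c ≠ 0) {z : ℂ} (hz : z ≠ 0)
    (u : Fin n → ℂ) (v : Fin m → ℂ) (h : GG c u v) : Inv14 c z u v := by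
  have main : ∀ z : ℂ, z ≠ 0 → z ≠ 1 → Inv14 c z u v := by
    intro z hz hz1
    rcases le_total n m with hnm | hnm
    · exact inv_le hc hz hz1 (m - n) n m (by omega) u v h
    · exact inv_ge hc hz hz1 (n - m) n m (by omega) u v h
  have hid : Tendsto (fun w : ℂ => w) (𝓝[≠] z) (𝓝 z) := tendsto_id.mono_left nhdsWithin_le_nhds
  have hinv : Tendsto (fun w : ℂ => w⁻¹) (𝓝[≠] z) (𝓝 z⁻¹) := hid.inv₀ hz
  have L := ((((tendsto_const_nhds (x := (1 : ℂ))).sub hid).pow n).const_mul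
    (∏ j, ∏ i, fC c (v j) (u i))).mul ((tend_Kz c z u (fun j => v j + c)).comp hid)
  have R := ((hid.neg.pow n).mul (((tendsto_const_nhds (x := (1 : ℂ))).sub hid).pow m)).mul
    ((tend_Kz c z⁻¹ v u).comp hinv)
  by_cases hz1 : z = 1
  · refine tendsto_nhds_unique (L.congr' ?_) R
    have h0 : ∀ᶠ w in 𝓝[≠] z, w ≠ 0 := hid.eventually_ne hz
    filter_upwards [h0, self_mem_nhdsWithin] with w hw hw1
    exact main w hw (by rw [← hz1]; exact hw1)
  · exact main z hz hz1

lemma GG_of {n m : ℕ} {c : ℂ} (hc : c ≠ 0) {u : Fin n → ℂ} {v : Fin m → ℂ}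
    (h : Generic c (Fin.append u v)) : GG c u v ∧ GG (-c) u v := by
  have huu : ∀ i k, i ≠ k → u i - u k ≠ 0 ∧ u i - u k ≠ c ∧ u i - u k ≠ -c := by
    intro i k hik
    have := h (Fin.castAdd m i) (Fin.castAdd m k) (by simpa using hik)
    simp only [Fin.append_left] at this
    exact ⟨this.1, this.2.1, this.2.2.1⟩
  have hvv : ∀ i k, i ≠ k → v i - v k ≠ 0 ∧ v i - v k ≠ c ∧ v i - v k ≠ -c := by
    intro i k hik
    have := h (Fin.natAdd n i) (Fin.natAdd n k) (by simpa using hik)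
    simp only [Fin.append_right] at this
    exact ⟨this.1, this.2.1, this.2.2.1⟩
  have hvu : ∀ j i, v j - u i ≠ 0 ∧ v j - u i ≠ c ∧ v j - u i ≠ -c := by
    intro j i
    have := h (Fin.natAdd n j) (Fin.castAdd m i) (by
      intro e
      have := congrArg Fin.val e
      have := i.2
      simp at *
      omega)
    simp only [Fin.append_right, Fin.append_left] at this
    exact ⟨this.1, this.2.1, this.2.2.1⟩
  have iU : Function.Injective u := fun a b hab => by
    by_contra hne; exact (huu a b hne).1 (sub_eq_zero.2 hab)
  have iV : Function.Injective v := fun a b hab => by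
    by_contra hne; exact (hvv a b hne).1 (sub_eq_zero.2 hab)
  refine ⟨⟨iU, iV, ?_, ?_, fun j i => (hvu j i).1, ?_⟩,
    ⟨iU, iV, ?_, ?_, fun j i => (hvu j i).1, ?_⟩⟩
  · intro i k e
    by_cases hik : i = k
    · subst hik; exact hc (by linear_combination e)
    · exact (huu i k hik).2.2 (by linear_combination e)
  · intro i k e
    by_cases hik : i = k
    · subst hik; exact hc (by linear_combination e)
    · exact (hvv i k hik).2.2 (by linear_combination e)
  · intro j i e
    exact (hvu j i).2.2 (by linear_combination e)
  · intro i k e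
    by_cases hik : i = k
    · subst hik; exact hc (by linear_combination -e)
    · exact (huu i k hik).2.1 (by linear_combination e)
  · intro i k e
    by_cases hik : i = k
    · subst hik; exact hc (by linear_combination -e)
    · exact (hvv i k hik).2.1 (by linear_combination e)
  · intro j i e
    exact (hvu j i).2.1 (by linear_combination e)

/-- Inversion relation for the modified Izergin determinant with shifted arguments. -/
theorem stmt14
    (c : ℂ) (hc : c ≠ 0) (z : ℂ) (hz : z ≠ 0) (n m : ℕ)
    (u : Fin n → ℂ) (v : Fin m → ℂ)
    (hgen : Generic c (Fin.append u v)) :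
    (∏ j, ∏ i, fC c (v j) (u i)) * (1 - z) ^ n * KIz c z u (fun j => v j + c)
        = (-z) ^ n * (1 - z) ^ m * KIz c z⁻¹ v u ∧
      (∏ i, ∏ j, fC c (u i) (v j)) * (1 - z) ^ n * KIzBar c z u (fun j => v j - c)
        = (-z) ^ n * (1 - z) ^ m * KIzBar c z⁻¹ v u := by
  obtain ⟨h1, h2⟩ := GG_of hc hgen
  refine ⟨inv_all hc hz u v h1, ?_⟩
  have := inv_all (neg_ne_zero.2 hc) hz u v h2
  unfold Inv14 at this
  unfold KIzBar
  have e : (∏ i, ∏ j, fC c (u i) (v j)) = ∏ j, ∏ i, fC (-c) (v j) (u i) := by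
    rw [Finset.prod_comm]
    refine Finset.prod_congr rfl fun j _ => Finset.prod_congr rfl fun i _ => ?_
    rw [fC, fC, ← neg_div_neg_eq]
    congr 1 <;> ring
  rw [e]
  simpa only [sub_eq_add_neg] using this
end
end

section
/- For generic tuples ξ̄ (length l), ū (length n), v̄ (length m): Σ_{ξ̄ ⇒ {ξ̄_I, ξ̄_II}} K^{(1)}_{n,#ξ̄_I}(ū | ξ̄_I + c)·K^{(1)}_{m,#ξ̄_II}(v̄ | ξ̄_II + c)·f(ξ̄_II, ξ̄_I)/f(ξ̄_II, ū) = K^{(1)}_{n+m,l}({ū, v̄} | ξ̄ + c), and Σ_{ξ̄ ⇒ {ξ̄_I, ξ̄_II}} \bar{K}^{(1)}_{n,#ξ̄_I}(ū | ξ̄_I − c)·\bar{K}^{(1)}_{m,#ξ̄_II}(v̄ | ξ̄_II − c)·f(ξ̄_I, ξ̄_II)/f(ū, ξ̄_II) = \bar{K}^{(1)}_{n+m,l}({ū, v̄} | ξ̄ − c), where the sums run over all partitions of ξ̄ into two disjoint subtuples and {ū, v̄} denotes the concatenated (n+m)-tuple. -/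
open scoped BigOperators

noncomputable section

open Finset in
lemma det_neg_one_add {κ : Type*} [Fintype κ] [DecidableEq κ] (A : Matrix κ κ ℂ) :
    Matrix.det (-1 + A) = ∑ s : Finset κ, (-1) ^ (sᶜ).card *
      (A.submatrix (Subtype.val : s → κ) (Subtype.val : s → κ)).det := by
  rw [add_comm]
  let N : κ → κ → ℂ := (-1 : Matrix κ κ ℂ).row
  have h := (Matrix.detRowAlternating : (κ → ℂ) [⋀^κ]→ₗ[ℂ] ℂ).map_add_univ A.row N
  have h0 : Matrix.det (A + -1) = (Matrix.detRowAlternating : (κ → ℂ) [⋀^κ]→ₗ[ℂ] ℂ)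
    (A.row + N) := rfl
  rw [h0, h]
  refine Finset.sum_congr rfl fun s _ => ?_
  rw [← Matrix.det_piecewise_one_eq_submatrix_det]
  have h2 : (s.piecewise A.row N) =
      fun i => (if i ∈ s then (1:ℂ) else -1) • (s.piecewise A.row (1 : Matrix κ κ ℂ).row) i := by
    funext i j
    by_cases hi : i ∈ s <;> simp [Finset.piecewise, hi, N, Matrix.row]
  rw [h2]
  have h3 := (Matrix.detRowAlternating : (κ → ℂ) [⋀^κ]→ₗ[ℂ] ℂ).map_smul_univ
    (fun i => (if i ∈ s then (1:ℂ) else -1)) (s.piecewise A.row (1 : Matrix κ κ ℂ).row)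
  rw [h3, smul_eq_mul]
  congr 1
  rw [Finset.prod_ite]
  simp [Finset.filter_notMem_eq_sdiff, Finset.compl_eq_univ_sdiff]

lemma cauchy_fin (c : ℂ) (hc : c ≠ 0) (n : ℕ) : ∀ (y : Fin n → ℂ)
    (_ : ∀ i j, y i - y j + c ≠ 0),
    Matrix.det (Matrix.of fun j k => 1 / hC c (y j) (y k)) =
      ∏ j, ∏ k, if j = k then 1 else (fC c (y j) (y k))⁻¹ := by
  induction n with
  | zero => intro y _; simp
  | succ n ih =>
    intro y hy
    have ih' := ih (fun i => y i.succ) (fun i j => hy _ _)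
    let M : Matrix (Fin (n+1)) (Fin (n+1)) ℂ := Matrix.of fun j k => 1 / hC c (y j) (y k)
    let e : Unit ⊕ Fin n ≃ Fin (n+1) :=
      (Equiv.sumComm _ _).trans ((Equiv.optionEquivSumPUnit _).symm.trans
        (finSuccEquiv n).symm)
    have e1 : ∀ t, e (Sum.inl t) = 0 := fun t => by simp [e]
    have e2 : ∀ t, e (Sum.inr t) = Fin.succ t := fun t => by simp [e]
    have hb : M.submatrix e e = Matrix.fromBlocks 1
        (Matrix.of fun _ k => 1 / hC c (y 0) (y (Fin.succ k)))
        (Matrix.of fun k _ => 1 / hC c (y (Fin.succ k)) (y 0))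
        (Matrix.of fun j k => 1 / hC c (y (Fin.succ j)) (y (Fin.succ k))) := by
      ext i j
      rcases i with i | i <;> rcases j with j | j <;> simp [M, e1, e2, hC, hc]
    change M.det = _
    rw [← Matrix.det_submatrix_equiv_self e M, hb, Matrix.det_fromBlocks_one₁₁]
    have hs : (Matrix.of (fun j k => 1 / hC c (y (Fin.succ j)) (y (Fin.succ k))) -
        (Matrix.of fun k (_ : Unit) => 1 / hC c (y (Fin.succ k)) (y 0)) *
        (Matrix.of fun (_ : Unit) k => 1 / hC c (y 0) (y (Fin.succ k))) : Matrix (Fin n) (Fin n) ℂ)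
        = Matrix.diagonal (fun j : Fin n => (fC c (y j.succ) (y 0))⁻¹) *
          (Matrix.of fun j k => 1 / hC c (y (Fin.succ j)) (y (Fin.succ k))) *
          Matrix.diagonal (fun j : Fin n => (fC c (y 0) (y j.succ))⁻¹) := by
      ext j k
      rw [Matrix.mul_diagonal, Matrix.diagonal_mul]
      simp only [Matrix.sub_apply, Matrix.mul_apply, Matrix.of_apply, hC, fC,
        Finset.univ_unique, Finset.sum_singleton]
      have h1 := hy j.succ k.succ
      have h2 := hy j.succ 0
      have h3 := hy 0 k.succ
      simp only [inv_div, one_div]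
      field_simp
      ring
    rw [hs, Matrix.det_mul, Matrix.det_mul, Matrix.det_diagonal, Matrix.det_diagonal, ih']
    simp only [Fin.prod_univ_succ, Fin.succ_inj, Finset.prod_mul_distrib]
    simp [Fin.succ_ne_zero, (Fin.succ_ne_zero _).symm]
    ring

lemma cauchy_gen (c : ℂ) (hc : c ≠ 0) {κ : Type*} [Fintype κ] [DecidableEq κ] (y : κ → ℂ)
    (hy : ∀ i j, y i - y j + c ≠ 0) :
    Matrix.det (Matrix.of fun j k => 1 / hC c (y j) (y k)) =
      ∏ j, ∏ k, if j = k then 1 else (fC c (y j) (y k))⁻¹ := by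
  have e := (Fintype.equivFin κ).symm
  have h := cauchy_fin c hc _ (fun i => y (e i)) (fun i j => hy _ _)
  rw [← Matrix.det_submatrix_equiv_self e]
  refine h.trans ?_
  rw [← e.prod_comp]
  refine Finset.prod_congr rfl fun i _ => ?_
  rw [← e.prod_comp]
  simp

/-- double product -/
def wP {κ : Type*} (φ : κ → κ → ℂ) (s t : Finset κ) : ℂ := ∏ i ∈ s, ∏ j ∈ t, φ i j

lemma KIz_expand (c : ℂ) (hc : c ≠ 0) {ι κ : Type*} [Fintype ι] [Fintype κ] [DecidableEq κ]
    (x : ι → ℂ) (y : κ → ℂ) (hy : ∀ i j, y i - y j + c ≠ 0) (hy' : ∀ i j, i ≠ j → y i - y j ≠ 0) :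
    KIz c 1 x y = ∑ s : Finset κ, (-1) ^ (sᶜ).card * ((∏ j ∈ s, ∏ i, fC c (x i) (y j)) *
      wP (fun i j => fC c (y i) (y j)) s sᶜ) := by
  have hf : ∀ i j, i ≠ j → fC c (y i) (y j) ≠ 0 := fun i j h =>
    div_ne_zero (hy i j) (hy' i j h)
  let P : κ → ℂ := fun j =>
    (∏ i, fC c (x i) (y j)) * (∏ i ∈ Finset.univ.erase j, fC c (y j) (y i))
  have hM : KIz c 1 x y = Matrix.det (-1 + Matrix.of fun j k => P j * (1 / hC c (y j) (y k))) := by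
    unfold KIz
    congr 1
    ext j k
    simp only [Matrix.of_apply, Matrix.add_apply, Matrix.neg_apply, Matrix.one_apply, P]
    ring
  rw [hM, det_neg_one_add]
  refine Finset.sum_congr rfl fun s _ => ?_
  congr 1
  have h1 : (Matrix.of fun j k => P j * (1 / hC c (y j) (y k))).submatrix
      (Subtype.val : s → κ) (Subtype.val : s → κ) =
      Matrix.diagonal (fun j : s => P j) *
        Matrix.of fun j k : s => 1 / hC c (y j) (y k) := by
    ext j k
    rw [Matrix.diagonal_mul]; rfl
  rw [h1, Matrix.det_mul, Matrix.det_diagonal,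
    cauchy_gen c hc (fun j : s => y j) (fun i j => hy _ _)]
  rw [← Finset.prod_mul_distrib, wP, ← Finset.prod_mul_distrib, ← Finset.prod_coe_sort s]
  refine Finset.prod_congr rfl fun j _ => ?_
  simp only [P]
  rw [mul_assoc]
  congr 1
  have h2 : (∏ k : s, if j = k then 1 else (fC c (y j) (y k))⁻¹)
      = ∏ k ∈ s.erase j, (fC c (y j) (y k))⁻¹ := by
    have : ∏ k ∈ s.erase j, (fC c (y j) (y k))⁻¹ =
        ∏ k ∈ s, if (j:κ) = k then 1 else (fC c (y j) (y k))⁻¹ := by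
      rw [← Finset.mul_prod_erase s _ j.2]
      simp only [if_true, one_mul]
      refine Finset.prod_congr rfl fun k hk => ?_
      rw [if_neg (Finset.ne_of_mem_erase hk).symm]
    rw [this, ← Finset.prod_coe_sort s]
    refine Finset.prod_congr rfl fun k _ => ?_
    simp only [Subtype.ext_iff]
  rw [h2]
  have h3 : Finset.univ.erase (j:κ) = s.erase j ∪ sᶜ := by
    ext k
    have := j.2
    simp only [Finset.mem_erase, Finset.mem_union, Finset.mem_compl, Finset.mem_univ]
    grind
  rw [h3, Finset.prod_union]
  · rw [Finset.prod_inv_distrib, mul_comm, ← mul_assoc, inv_mul_cancel₀, one_mul]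
    exact Finset.prod_ne_zero_iff.2 fun k hk => hf _ _ (Finset.ne_of_mem_erase hk).symm
  · exact Finset.disjoint_left.2 fun k hk hk' =>
      (Finset.mem_compl.1 hk') (Finset.mem_of_mem_erase hk)

lemma KIz_zero (c : ℂ) (hc : c ≠ 0) {κ : Type*} [Fintype κ] [DecidableEq κ] [Nonempty κ]
    (y : κ → ℂ) (hy : ∀ i j, y i - y j + c ≠ 0) (hy' : ∀ i j, i ≠ j → y i - y j ≠ 0) :
    KIz c 1 (fun i : Empty => i.elim) y = 0 := by
  unfold KIz
  rw [← Matrix.exists_vecMul_eq_zero_iff]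
  refine ⟨1, one_ne_zero, ?_⟩
  ext k
  simp only [Matrix.vecMul, dotProduct, Pi.one_apply, one_mul, Matrix.of_apply, Pi.zero_apply,
    Finset.univ_eq_empty, Finset.prod_empty, Finset.sum_add_distrib]
  let p : Polynomial ℂ := ∏ i ∈ Finset.univ.erase k, (Polynomial.X - Polynomial.C (y i - c))
  have hm : p.Monic := Polynomial.monic_prod_X_sub_C _ _
  have hcard : 0 < Fintype.card κ := Fintype.card_pos
  have hd : p.degree = ((Fintype.card κ - 1 : ℕ) : WithBot ℕ) := by
    rw [Polynomial.degree_eq_natDegree hm.ne_zero, Polynomial.natDegree_finsetProd_X_sub_C_eq_card,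
      Finset.card_erase_of_mem (Finset.mem_univ k), Finset.card_univ]
  have hL := Lagrange.leadingCoeff_eq_sum (s := Finset.univ) (v := y) (P := p)
    (fun i _ j _ h => by
      by_contra hne
      exact hy' i j hne (sub_eq_zero.2 h))
    (by rw [hd, Finset.card_univ]; norm_cast; omega)
  rw [hm.leadingCoeff] at hL
  have hsum : ∑ j, (∏ i ∈ Finset.univ.erase j, fC c (y j) (y i)) / hC c (y j) (y k) = 1 := by
    rw [hL]
    refine Finset.sum_congr rfl fun j _ => ?_
    have h1 : (∏ i ∈ Finset.univ.erase j, (y j - y i + c)) * c = ∏ i, (y j - y i + c) := by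
      rw [← Finset.prod_erase_mul Finset.univ _ (Finset.mem_univ j)]; simp
    have h2 : (∏ i ∈ Finset.univ.erase k, (y j - y i + c)) * (y j - y k + c)
        = ∏ i, (y j - y i + c) := Finset.prod_erase_mul Finset.univ _ (Finset.mem_univ k)
    have h3 : p.eval (y j) = ∏ i ∈ Finset.univ.erase k, (y j - y i + c) := by
      simp only [p, Polynomial.eval_prod, Polynomial.eval_sub, Polynomial.eval_X,
        Polynomial.eval_C]
      exact Finset.prod_congr rfl fun i _ => by ring
    have h4 : ∏ i ∈ Finset.univ.erase j, (y j - y i) ≠ 0 :=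
      Finset.prod_ne_zero_iff.2 fun i hi => hy' _ _ (Finset.ne_of_mem_erase hi).symm
    have h5 := hy j k
    rw [h3]
    simp only [fC, hC, Finset.prod_div_distrib]
    rw [← h2] at h1
    field_simp
    linear_combination h1
  simp [hsum]

lemma KIz_restr {κ : Type*} [DecidableEq κ] (c : ℂ) (hc : c ≠ 0) {ι : Type*} [Fintype ι]
    (x : ι → ℂ) (y : κ → ℂ) (hy : ∀ i j, y i - y j + c ≠ 0) (hy' : ∀ i j, i ≠ j → y i - y j ≠ 0)
    (s : Finset κ) :
    KIz c 1 x (fun i : s => y i) = ∑ t ∈ s.powerset, (-1) ^ (s \ t).card *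
      ((∏ j ∈ t, ∏ i, fC c (x i) (y j)) * wP (fun i j => fC c (y i) (y j)) t (s \ t)) := by
  rw [KIz_expand c hc x _ (fun i j => hy _ _)
    (fun i j h => hy' _ _ (fun h' => h (Subtype.ext h')))]
  refine Finset.sum_bij' (fun t _ => t.map (Function.Embedding.subtype _))
    (fun t _ => t.subtype (· ∈ s)) ?_ ?_ ?_ ?_ ?_
  · intro t _
    rw [Finset.mem_powerset]
    intro k hk
    simp only [Finset.mem_map, Function.Embedding.subtype_apply] at hk
    obtain ⟨a, -, rfl⟩ := hk
    exact a.2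
  · intro t _; simp
  · intro t _; ext a; simp
  · intro t ht
    ext a
    have := Finset.mem_powerset.1 ht
    simp only [Finset.mem_map, Function.Embedding.subtype_apply, Finset.mem_subtype]
    constructor
    · rintro ⟨b, hb, rfl⟩; exact hb
    · intro h; exact ⟨⟨a, this h⟩, h, rfl⟩
  · intro t _
    have h : s \ t.map (Function.Embedding.subtype _) = tᶜ.map (Function.Embedding.subtype _) := by
      ext a
      simp only [Finset.mem_sdiff, Finset.mem_map, Function.Embedding.subtype_apply,
        Finset.mem_compl, Subtype.exists, exists_and_right, exists_eq_right]
      constructor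
      · rintro ⟨h1, h2⟩; exact ⟨h1, fun h3 => h2 ⟨h1, h3⟩⟩
      · rintro ⟨h1, h2⟩; exact ⟨h1, fun ⟨_, h3⟩ => h2 h3⟩
    rw [h]
    simp [wP]

lemma Z_zero {κ : Type*} [DecidableEq κ] (c : ℂ) (hc : c ≠ 0)
    (y : κ → ℂ) (hy : ∀ i j, y i - y j + c ≠ 0) (hy' : ∀ i j, i ≠ j → y i - y j ≠ 0)
    (s : Finset κ) (hs : s.Nonempty) :
    ∑ t ∈ s.powerset, (-1) ^ t.card * wP (fun i j => fC c (y i) (y j)) t (s \ t) = 0 := by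
  have h1 := KIz_restr c hc (fun i : Empty => i.elim) y hy hy' s
  have : Nonempty s := hs.to_subtype
  rw [KIz_zero c hc _ (fun i j => hy _ _)
    (fun i j h => hy' _ _ (fun h' => h (Subtype.ext h')))] at h1
  have h2 : ∑ t ∈ s.powerset, (-1) ^ t.card * wP (fun i j => fC c (y i) (y j)) t (s \ t) =
     (-1) ^ s.card * ∑ t ∈ s.powerset, (-1) ^ (s \ t).card *
      ((∏ j ∈ t, ∏ i : Empty, fC c (i.elim) (y j)) *
        wP (fun i j => fC c (y i) (y j)) t (s \ t)) := by
    rw [Finset.mul_sum]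
    refine Finset.sum_congr rfl fun t ht => ?_
    rw [← Finset.card_sdiff_add_card_eq_card (Finset.mem_powerset.1 ht), pow_add]
    have : ((-1:ℂ) ^ (s \ t).card) * (-1) ^ (s \ t).card = 1 := by
      rw [← mul_pow]; simp
    simp only [Finset.univ_eq_empty, Finset.prod_empty, Finset.prod_const_one, one_mul]
    linear_combination (-(-1) ^ t.card * wP (fun i j => fC c (y i) (y j)) t (s \ t)) * this
  rw [h2, ← h1, mul_zero]

section comb
variable {κ : Type*} [DecidableEq κ] (φ : κ → κ → ℂ)

lemma wP_union_left {s t r : Finset κ} (h : Disjoint s t) :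
    wP φ (s ∪ t) r = wP φ s r * wP φ t r := Finset.prod_union h

lemma wP_union_right {s t r : Finset κ} (h : Disjoint s t) :
    wP φ r (s ∪ t) = wP φ r s * wP φ r t := by
  simp only [wP, Finset.prod_union h, Finset.prod_mul_distrib]

lemma comb [Fintype κ] (a b : κ → ℂ)
    (hZ : ∀ s : Finset κ, s.Nonempty →
      ∑ t ∈ s.powerset, (-1) ^ t.card * wP φ t (s \ t) = 0) :
    ∑ s : Finset κ,
      (∑ t ∈ s.powerset, (-1) ^ (s \ t).card * ((∏ j ∈ t, a j) * wP φ t (s \ t))) *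
      (∑ t ∈ sᶜ.powerset, (-1) ^ (sᶜ \ t).card * ((∏ j ∈ t, b j) * wP φ t (sᶜ \ t))) *
      wP φ sᶜ s * (∏ j ∈ sᶜ, a j) =
    ∑ s : Finset κ, (-1) ^ (sᶜ).card * ((∏ j ∈ s, a j * b j) * wP φ s sᶜ) := by
  have hR : ∀ C : Finset κ, (-1) ^ (Cᶜ).card * ((∏ j ∈ C, a j * b j) * wP φ C Cᶜ) =
      ∑ B ∈ Cᶜ.powerset, ∑ D ∈ (C ∪ B)ᶜ.powerset,
        (-1) ^ B.card * (∏ j ∈ C, a j * b j) * wP φ C B *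
        ((∏ j ∈ (C ∪ B)ᶜ, a j) * wP φ (C ∪ B)ᶜ B * wP φ C (C ∪ B)ᶜ) *
        ((-1) ^ D.card * wP φ D ((C ∪ B)ᶜ \ D)) := by
    intro C
    rw [Finset.sum_eq_single Cᶜ]
    · simp [wP, mul_assoc]
    · intro B hB hne
      rw [← Finset.mul_sum, hZ, mul_zero]
      rw [Finset.nonempty_iff_ne_empty]
      intro h
      apply hne
      rw [Finset.mem_powerset] at hB
      refine Finset.Subset.antisymm hB fun k hk => ?_
      have : k ∉ (C ∪ B)ᶜ := by rw [h]; simp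
      simp only [Finset.mem_compl, Finset.mem_union] at this hk
      tauto
    · intro h; simp at h
  rw [Finset.sum_congr rfl fun C _ => hR C]
  have hL : ∀ s : Finset κ,
      (∑ t ∈ s.powerset, (-1) ^ (s \ t).card * ((∏ j ∈ t, a j) * wP φ t (s \ t))) *
      (∑ t ∈ sᶜ.powerset, (-1) ^ (sᶜ \ t).card * ((∏ j ∈ t, b j) * wP φ t (sᶜ \ t))) *
      wP φ sᶜ s * (∏ j ∈ sᶜ, a j) =
      ∑ t ∈ s.powerset, ∑ r ∈ sᶜ.powerset,
        ((-1) ^ (s \ t).card * ((∏ j ∈ t, a j) * wP φ t (s \ t))) *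
        ((-1) ^ (sᶜ \ r).card * ((∏ j ∈ r, b j) * wP φ r (sᶜ \ r))) *
        wP φ sᶜ s * (∏ j ∈ sᶜ, a j) := by
    intro s
    rw [Finset.sum_mul_sum]
    simp only [Finset.sum_mul]
  rw [Finset.sum_congr rfl fun C _ => hL C]
  simp only [Finset.sum_sigma']
  clear hZ hR hL
  refine Finset.sum_bij'
    (fun p _ => ⟨p.2.2, ⟨p.1 \ p.2.1, p.1ᶜ \ p.2.2⟩⟩)
    (fun p _ => ⟨(p.1 ∪ p.2.2)ᶜ, ⟨(p.1 ∪ p.2.1 ∪ p.2.2)ᶜ, p.1⟩⟩) ?_ ?_ ?_ ?_ ?_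
  · rintro ⟨I, S, T⟩ h
    simp only [Finset.mem_sigma, Finset.mem_univ, Finset.mem_powerset, true_and] at h ⊢
    grind [Finset.mem_compl]
  · rintro ⟨C, B, D⟩ h
    simp only [Finset.mem_sigma, Finset.mem_univ, Finset.mem_powerset, true_and] at h ⊢
    grind [Finset.mem_compl]
  · rintro ⟨I, S, T⟩ h
    simp only [Finset.mem_sigma, Finset.mem_univ, Finset.mem_powerset, true_and] at h ⊢
    have h1 : (T ∪ Iᶜ \ T)ᶜ = I := by grind [Finset.mem_compl]
    have h2 : (T ∪ I \ S ∪ Iᶜ \ T)ᶜ = S := by grind [Finset.mem_compl]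
    rw [h1, h2]
  · rintro ⟨C, B, D⟩ h
    simp only [Finset.mem_sigma, Finset.mem_univ, Finset.mem_powerset, true_and] at h ⊢
    have h1 : (C ∪ D)ᶜ \ (C ∪ B ∪ D)ᶜ = B := by grind [Finset.mem_compl]
    have h2 : (C ∪ D)ᶜᶜ \ C = D := by grind [Finset.mem_compl]
    rw [h1, h2]
  · rintro ⟨I, A, C⟩ h
    simp only [Finset.mem_sigma, Finset.mem_univ, Finset.mem_powerset, true_and] at h ⊢
    obtain ⟨B, hB⟩ : ∃ B, B = I \ A := ⟨_, rfl⟩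
    obtain ⟨D, hD⟩ : ∃ D, D = Iᶜ \ C := ⟨_, rfl⟩
    have h1 : I = A ∪ B := by grind [Finset.mem_compl]
    have h2 : Iᶜ = C ∪ D := by grind [Finset.mem_compl]
    have h3 : (C ∪ B)ᶜ = A ∪ D := by grind [Finset.mem_compl]
    have h4 : (A ∪ D) \ D = A := by grind [Finset.mem_compl]
    have dAB : Disjoint A B := by rw [Finset.disjoint_left]; grind [Finset.mem_compl]
    have dCD : Disjoint C D := by rw [Finset.disjoint_left]; grind [Finset.mem_compl]
    have dAD : Disjoint A D := by rw [Finset.disjoint_left]; grind [Finset.mem_compl]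
    rw [← hB, ← hD, h3, h4, h2, h1, wP_union_left φ dCD, wP_union_right φ dAB,
      wP_union_right φ dAB, wP_union_left φ dAD, wP_union_right φ dAD,
      Finset.prod_union dCD, Finset.prod_union dAD, Finset.prod_mul_distrib]
    ring
end comb

lemma fC_shift (c x y : ℂ) : fC c x (y + c) = (fC c y x)⁻¹ := by
  unfold fC
  rw [inv_div, ← neg_div_neg_eq]
  congr 1 <;> ring

lemma part1 (c : ℂ) (hc : c ≠ 0) (l n m : ℕ)
    (ξ : Fin l → ℂ) (u : Fin n → ℂ) (v : Fin m → ℂ)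
    (hy : ∀ i j, ξ i - ξ j + c ≠ 0) (hy' : ∀ i j, i ≠ j → ξ i - ξ j ≠ 0) :
    (∑ s : Finset (Fin l),
        KIz c 1 u (fun i => restr ξ s i + c) * KIz c 1 v (fun i => restr ξ sᶜ i + c) *
          (∏ i ∈ sᶜ, ∏ j ∈ s, fC c (ξ i) (ξ j)) /
          (∏ j ∈ sᶜ, ∏ i, fC c (ξ j) (u i)))
        = KIz c 1 (Fin.append u v) (fun i => ξ i + c) := by
  have k1 : ∀ i j, (ξ i + c) - (ξ j + c) + c ≠ 0 := fun i j => by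
    simpa using hy i j
  have k2 : ∀ i j, i ≠ j → (ξ i + c) - (ξ j + c) ≠ 0 := fun i j h => by
    simpa using hy' i j h
  have hφ : (fun i j => fC c (ξ i + c) (ξ j + c)) = fun i j => fC c (ξ i) (ξ j) := by
    funext i j; simp [fC]
  have hcomb := comb (fun i j => fC c (ξ i) (ξ j)) (fun j => ∏ i, fC c (u i) (ξ j + c))
    (fun j => ∏ i, fC c (v i) (ξ j + c)) (Z_zero c hc ξ hy hy')
  rw [KIz_expand c hc _ _ k1 k2, hφ]
  have hprod : ∀ j, ∏ i, fC c (Fin.append u v i) (ξ j + c) =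
      (∏ i, fC c (u i) (ξ j + c)) * ∏ i, fC c (v i) (ξ j + c) := fun j => by
    rw [Fin.prod_univ_add]; simp
  simp only [hprod]
  rw [← hcomb]
  refine Finset.sum_congr rfl fun s _ => ?_
  have e1 := KIz_restr c hc u (fun i => ξ i + c) k1 k2 s
  have e2 := KIz_restr c hc v (fun i => ξ i + c) k1 k2 sᶜ
  rw [hφ] at e1 e2
  rw [← e1, ← e2, div_eq_mul_inv]
  simp only [restr, wP, fC_shift, Finset.prod_inv_distrib]

/-- Summation formula for shifted modified Izergin determinants at `z = 1`. -/
theorem stmt17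
    (c : ℂ) (hc : c ≠ 0) (l n m : ℕ)
    (ξ : Fin l → ℂ) (u : Fin n → ℂ) (v : Fin m → ℂ)
    (hgen : Generic c (Fin.append (Fin.append u v) ξ)) :
    (∑ s : Finset (Fin l),
        KIz c 1 u (fun i => restr ξ s i + c) * KIz c 1 v (fun i => restr ξ sᶜ i + c) *
          (∏ i ∈ sᶜ, ∏ j ∈ s, fC c (ξ i) (ξ j)) /
          (∏ j ∈ sᶜ, ∏ i, fC c (ξ j) (u i)))
        = KIz c 1 (Fin.append u v) (fun i => ξ i + c) ∧
      (∑ s : Finset (Fin l),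
        KIzBar c 1 u (fun i => restr ξ s i - c) *
            KIzBar c 1 v (fun i => restr ξ sᶜ i - c) *
          (∏ i ∈ s, ∏ j ∈ sᶜ, fC c (ξ i) (ξ j)) /
          (∏ i, ∏ j ∈ sᶜ, fC c (u i) (ξ j)))
        = KIzBar c 1 (Fin.append u v) (fun i => ξ i - c) := by
  have hg : ∀ i j, i ≠ j → ξ i - ξ j ≠ 0 ∧ ξ i - ξ j ≠ c ∧ ξ i - ξ j ≠ -c := by
    intro i j hij
    have h := hgen (Fin.natAdd (n + m) i) (Fin.natAdd (n + m) j)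
      (fun h => hij (by simpa using h))
    simp only [Fin.append_right] at h
    exact ⟨h.1, h.2.1, h.2.2.1⟩
  have h0 : ∀ i j, i ≠ j → ξ i - ξ j ≠ 0 := fun i j h => (hg i j h).1
  have hp : ∀ i j, ξ i - ξ j + c ≠ 0 := fun i j h => by
    by_cases hij : i = j
    · subst hij; simp [hc] at h
    · exact (hg i j hij).2.2 (eq_neg_of_add_eq_zero_left h)
  have hm : ∀ i j, ξ i - ξ j + -c ≠ 0 := fun i j h => by
    by_cases hij : i = j
    · subst hij; simp [hc] at h
    · exact (hg i j hij).2.1 (by linear_combination h)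
  refine ⟨part1 c hc l n m ξ u v hp h0, ?_⟩
  have h2 := part1 (-c) (neg_ne_zero.2 hc) l n m ξ u v hm h0
  have hf : ∀ x y, fC (-c) x y = fC c y x := fun x y => by
    unfold fC
    rw [← neg_div_neg_eq]
    congr 1 <;> ring
  simp only [← sub_eq_add_neg, hf] at h2
  simp only [KIzBar]
  rw [← h2]
  refine Finset.sum_congr rfl fun s _ => ?_
  rw [Finset.prod_comm (s := s), Finset.prod_comm (s := Finset.univ)]
end
end

section
/- Let w_1, …, w_p (p ≥ 1) be complex numbers that are pairwise distinct with w_j − w_k ∉ {c, −c} for all j ≠ k, and let u = w_{j_0} for some index j_0. Then Σ_{k=1}^{p} ( ∏_{j ≠ k} f(w_j, w_k) ) / h(u, w_k) = 1. -/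
open scoped BigOperators

noncomputable section

/-- The summation identity `Σ_k (∏_{j≠k} f(w_j,w_k)) / h(u,w_k) = 1` whenever
`u` is one of the parameters `w_j`. -/
theorem stmt19
    (c : ℂ) (hc : c ≠ 0) (p : ℕ) (w : Fin p → ℂ) (j0 : Fin p)
    (hw : ∀ j k, j ≠ k → w j ≠ w k ∧ w j - w k ≠ c ∧ w j - w k ≠ -c) :
    ∑ k : Fin p, (∏ j ∈ Finset.univ.erase k, fC c (w j) (w k)) / hC c (w j0) (w k) = 1 := by
  have hinj : Set.InjOn w ((Finset.univ : Finset (Fin p)) : Set (Fin p)) := by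
    intro a _ b _ hab
    by_contra h
    exact (hw a b h).1 hab
  set P : Polynomial ℂ :=
    ∏ j ∈ Finset.univ.erase j0, (Polynomial.X - Polynomial.C (w j + c)) with hP
  have hmonic : P.Monic := Polynomial.monic_prod_X_sub_C (fun j => w j + c) _
  have hcard : (Finset.univ.erase j0).card + 1 = (Finset.univ : Finset (Fin p)).card :=
    Finset.card_erase_add_one (Finset.mem_univ j0)
  have hdeg : P.degree = ((Finset.univ.erase j0).card : WithBot ℕ) := by
    rw [hP, Polynomial.degree_prod]
    simp only [Polynomial.degree_X_sub_C, Finset.sum_const, nsmul_eq_mul, mul_one]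
  have key := Lagrange.leadingCoeff_eq_sum (s := Finset.univ) (v := w) hinj (P := P)
    (by rw [hdeg, ← hcard]; push_cast; rfl)
  rw [hmonic.leadingCoeff] at key
  rw [key]
  refine Finset.sum_congr rfl fun k _ => ?_
  have hne : w j0 - w k + c ≠ 0 := by
    by_cases h : j0 = k
    · subst h; simpa using hc
    · intro h0
      exact (hw j0 k h).2.2 (eq_neg_of_add_eq_zero_left h0)
  have h1 : ∏ j ∈ Finset.univ.erase k, fC c (w j) (w k) =
      (∏ j ∈ Finset.univ.erase k, (w k - (w j + c))) /
        ∏ j ∈ Finset.univ.erase k, (w k - w j) := by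
    rw [← Finset.prod_div_distrib]
    refine Finset.prod_congr rfl fun j _ => ?_
    rw [fC, ← neg_div_neg_eq]
    congr 1 <;> ring
  have h2 := Finset.mul_prod_erase Finset.univ (fun j => w k - (w j + c)) (Finset.mem_univ k)
  have h3 := Finset.mul_prod_erase Finset.univ (fun j => w k - (w j + c)) (Finset.mem_univ j0)
  have h4 : P.eval (w k) = ∏ j ∈ Finset.univ.erase j0, (w k - (w j + c)) := by
    rw [hP, Polynomial.eval_prod]
    simp
  rw [h1, h4, hC, div_right_comm]
  congr 1
  rw [div_div_eq_mul_div, div_eq_iff hne]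
  linear_combination h3 - h2
end
end
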